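/- arXiv:2510.09279 — 7 statements merged into one kernel-verified Lean document; each statement's English description precedes it below -/
import Mathlib

section
/- Let H be a separable infinite-dimensional complex Hilbert space and let T ∈ B(H) be a (p,k)-quasihyponormal operator for some 0 < p ≤ 1 and positive integer k. Then T has Bishop's property (β). -/
open ContinuousLinearMap Filter

set_option synthInstance.maxHeartbeats 400000

/-- The `p`-th power of an operator (intended for positive operators), via the
continuous functional calculus. -/
noncomputable def opRpow {H : Type*} [NormedAddCommGroup H] [InnerProductSpace ℂ H]
    [CompleteSpace H] (A : H →L[ℂ] H) (p : ℝ) : H →L[ℂ] H :=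
  cfc (fun x : ℝ => x ^ p) A

/-- The logarithm of an operator (intended for positive invertible operators), via the
continuous functional calculus. -/
noncomputable def opLog {H : Type*} [NormedAddCommGroup H] [InnerProductSpace ℂ H]
    [CompleteSpace H] (A : H →L[ℂ] H) : H →L[ℂ] H :=
  cfc Real.log A

/-- `|A| = (A*A)^{1/2}`, via the continuous functional calculus. -/
noncomputable def opAbs {H : Type*} [NormedAddCommGroup H] [InnerProductSpace ℂ H]
    [CompleteSpace H] (A : H →L[ℂ] H) : H →L[ℂ] H :=
  cfc (fun x : ℝ => Real.sqrt x) (adjoint A * A)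

/-- `A` is hyponormal: `A*A ≥ AA*`. -/
def Hyponormal {H : Type*} [NormedAddCommGroup H] [InnerProductSpace ℂ H]
    [CompleteSpace H] (A : H →L[ℂ] H) : Prop :=
  A * adjoint A ≤ adjoint A * A

/-- `A` is `p`-hyponormal: `(A*A)^p ≥ (AA*)^p`. -/
def PHyponormal {H : Type*} [NormedAddCommGroup H] [InnerProductSpace ℂ H]
    [CompleteSpace H] (A : H →L[ℂ] H) (p : ℝ) : Prop :=
  opRpow (A * adjoint A) p ≤ opRpow (adjoint A * A) p

/-- `A` is `(p,k)`-quasihyponormal: `A*^k ((A*A)^p − (AA*)^p) A^k ≥ 0`. -/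
def PKQuasihyponormal {H : Type*} [NormedAddCommGroup H] [InnerProductSpace ℂ H]
    [CompleteSpace H] (A : H →L[ℂ] H) (p : ℝ) (k : ℕ) : Prop :=
  0 ≤ (adjoint A) ^ k * (opRpow (adjoint A * A) p - opRpow (A * adjoint A) p) * A ^ k

/-- `A` is log-hyponormal: `A` invertible and `log(A*A) ≥ log(AA*)`. -/
def LogHyponormal {H : Type*} [NormedAddCommGroup H] [InnerProductSpace ℂ H]
    [CompleteSpace H] (A : H →L[ℂ] H) : Prop :=
  IsUnit A ∧ opLog (A * adjoint A) ≤ opLog (adjoint A * A)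

/-- `A` is a class A operator: `|A²| ≥ |A|²`. -/
def ClassA {H : Type*} [NormedAddCommGroup H] [InnerProductSpace ℂ H]
    [CompleteSpace H] (A : H →L[ℂ] H) : Prop :=
  opAbs A ^ 2 ≤ opAbs (A ^ 2)

/-- `A` is paranormal: `‖Ax‖² ≤ ‖A²x‖ ‖x‖` for all `x`. -/
def Paranormal {H : Type*} [NormedAddCommGroup H] [InnerProductSpace ℂ H]
    (A : H →L[ℂ] H) : Prop :=
  ∀ x : H, ‖A x‖ ^ 2 ≤ ‖A (A x)‖ * ‖x‖

/-- `A` is normaloid: its norm equals its spectral radius. -/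
def Normaloid {H : Type*} [NormedAddCommGroup H] [InnerProductSpace ℂ H]
    (A : H →L[ℂ] H) : Prop :=
  spectralRadius ℂ A = ‖A‖₊

/-- `T` has Bishop's property (β): whenever `(T - z) fₙ(z) → 0` uniformly on compact subsets
of an open set `D ⊆ ℂ`, for analytic `H`-valued functions `fₙ` on `D`, also `fₙ → 0`
uniformly on compact subsets of `D`. -/
def HasBishopBeta {H : Type*} [NormedAddCommGroup H] [InnerProductSpace ℂ H]
    (T : H →L[ℂ] H) : Prop :=
  ∀ D : Set ℂ, IsOpen D → ∀ f : ℕ → ℂ → H,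
    (∀ n, AnalyticOnNhd ℂ (f n) D) →
    (∀ K : Set ℂ, K ⊆ D → IsCompact K →
      TendstoUniformlyOn (fun n z => T (f n z) - z • f n z) 0 atTop K) →
    ∀ K : Set ℂ, K ⊆ D → IsCompact K →
      TendstoUniformlyOn (fun n z => f n z) 0 atTop K

/-- `T` has the single valued extension property: there is no nonzero analytic `H`-valued
function `f` on a nonempty open `D ⊆ ℂ` with `(T - z) f(z) ≡ 0` on `D`. -/
def HasSVEP {H : Type*} [NormedAddCommGroup H] [InnerProductSpace ℂ H]
    (T : H →L[ℂ] H) : Prop :=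
  ∀ D : Set ℂ, IsOpen D → D.Nonempty → ∀ f : ℂ → H,
    AnalyticOnNhd ℂ f D → (∀ z ∈ D, T (f z) - z • f z = 0) →
    ∀ z ∈ D, f z = 0

/-- The restriction of `A` to an invariant subspace `M`, as an operator on `M`. -/
noncomputable def restrictOp {H : Type*} [NormedAddCommGroup H] [InnerProductSpace ℂ H]
    (A : H →L[ℂ] H) (M : Submodule ℂ H) (h : ∀ x ∈ M, A x ∈ M) : M →L[ℂ] M :=
  (A.comp M.subtypeL).codRestrict M (fun x => h x x.2)

theorem aux_scalar {p : ℝ} (hp0 : 0 < p) (hp1 : p ≤ 1) {L s t : ℝ} (ht : 0 ≤ t) (hts : t < s)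
    (hs : s ≤ L) : p * L ^ (p - 1) * (s - t) ≤ s ^ p - t ^ p := by
  have hs0 : 0 < s := lt_of_le_of_lt ht hts
  have h1 := _root_.rpow_one_add_le_one_add_mul_self (s := t / s - 1)
    (by have := div_nonneg ht hs0.le; linarith) hp0.le hp1
  have h2 : (1 + (t / s - 1)) ^ p = t ^ p / s ^ p := by
    rw [← Real.div_rpow ht hs0.le]; congr 1; ring
  rw [h2] at h1
  have hsp : 0 < s ^ p := Real.rpow_pos_of_pos hs0 p
  rw [div_le_iff₀ hsp] at h1
  have h3 : s ^ (p - 1) = s ^ p / s := Real.rpow_sub_one hs0.ne' p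
  have h4 : L ^ (p - 1) ≤ s ^ (p - 1) :=
    Real.rpow_le_rpow_of_nonpos hs0 hs (by linarith)
  have h5 : (1 + p * (t / s - 1)) * s ^ p = s ^ p - p * s ^ (p - 1) * (s - t) := by
    rw [h3]; field_simp; ring
  have h6 : p * L ^ (p - 1) * (s - t) ≤ p * s ^ (p - 1) * (s - t) :=
    mul_le_mul_of_nonneg_right (mul_le_mul_of_nonneg_left h4 hp0.le) (by linarith)
  linarith

theorem aux_scalar2 {p : ℝ} (hp0 : 0 < p) (hp1 : p ≤ 1) {L s t : ℝ} (ht : 0 ≤ t) (hs0 : 0 ≤ s)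
    (hs : s ≤ L) (htL : t ≤ L) :
    0 ≤ (s - t) * (s ^ p - t ^ p) - p * L ^ (p - 1) * ((s - t) * (s - t)) := by
  rcases lt_trichotomy t s with h | h | h
  · have := mul_le_mul_of_nonneg_left (aux_scalar hp0 hp1 ht h hs) (sub_nonneg.2 h.le)
    linarith
  · simp [h]
  · have := mul_le_mul_of_nonneg_left (aux_scalar hp0 hp1 hs0 h htL) (sub_nonneg.2 h.le)
    linarith

section
variable {H : Type*} [NormedAddCommGroup H] [InnerProductSpace ℂ H] [CompleteSpace H]

theorem aux_intertwine (A B T : H →L[ℂ] H) (hA : IsSelfAdjoint A) (hB : IsSelfAdjoint B)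
    (h : B * T = T * A) (φ : ℝ → ℝ) (hφ : Continuous φ) :
    cfc φ B * T = T * cfc φ A := by
  have hpoly : ∀ q : Polynomial ℝ, Polynomial.aeval B q * T = T * Polynomial.aeval A q := by
    intro q
    induction q using Polynomial.induction_on with
    | C r => simp [Algebra.commutes]
    | add q₁ q₂ h1 h2 => simp [add_mul, mul_add, h1, h2]
    | monomial n a hn =>
      rw [pow_succ, ← mul_assoc, map_mul, map_mul _ _ (Polynomial.X), Polynomial.aeval_X,
        Polynomial.aeval_X, mul_assoc, h, ← mul_assoc, hn, mul_assoc]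
  rw [← sub_eq_zero, ← norm_eq_zero]
  refine le_antisymm (le_of_forall_pos_le_add fun ε hε => ?_) (norm_nonneg _)
  set L := max ‖A‖ ‖B‖
  have hη : 0 < ε / (2 * (‖T‖ + 1)) := by positivity
  obtain ⟨q, hq⟩ := exists_polynomial_near_of_continuousOn (-L) L φ hφ.continuousOn _ hη
  have key : ∀ X : H →L[ℂ] H, IsSelfAdjoint X → ‖X‖ ≤ L →
      ‖cfc φ X - Polynomial.aeval X q‖ ≤ ε / (2 * (‖T‖ + 1)) := by
    intro X hX hXL
    rw [← cfc_polynomial q X, ← cfc_sub φ q.eval X]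
    refine norm_cfc_le hη.le fun s hs => ?_
    have h1 : ‖s‖ ≤ ‖X‖ := IsometricContinuousFunctionalCalculus.norm_spectrum_le X hs
    rw [Real.norm_eq_abs] at h1 ⊢
    rw [abs_sub_comm]
    exact (hq s (abs_le.1 (h1.trans hXL))).le
  have e : cfc φ B * T - T * cfc φ A = (cfc φ B - Polynomial.aeval B q) * T
      - T * (cfc φ A - Polynomial.aeval A q) := by
    rw [sub_mul, mul_sub, hpoly]; abel
  rw [e]
  have k1 := key A hA (le_max_left _ _)
  have k2 := key B hB (le_max_right _ _)
  have hT : ‖T‖ ≤ ‖T‖ + 1 := by linarith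
  calc _ ≤ ‖(cfc φ B - Polynomial.aeval B q) * T‖ + ‖T * (cfc φ A - Polynomial.aeval A q)‖ :=
        norm_sub_le _ _
    _ ≤ ‖cfc φ B - Polynomial.aeval B q‖ * ‖T‖ + ‖T‖ * ‖cfc φ A - Polynomial.aeval A q‖ :=
        add_le_add (norm_mul_le _ _) (norm_mul_le _ _)
    _ ≤ ε / (2 * (‖T‖ + 1)) * (‖T‖ + 1) + (‖T‖ + 1) * (ε / (2 * (‖T‖ + 1))) := by gcongr
    _ = 0 + ε := by field_simp; ring

theorem aux_cfc (A : H →L[ℂ] H) (hA0 : 0 ≤ A) {p : ℝ} (hp0 : 0 < p) (hp1 : p ≤ 1) {L t : ℝ}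
    (hAL : ‖A‖ ≤ L) (ht0 : 0 ≤ t) (htL : t ≤ L) :
    0 ≤ (A - (t : ℂ) • 1) * (opRpow A p - ((t ^ p : ℝ) : ℂ) • 1)
      - ((p * L ^ (p - 1) : ℝ) : ℂ) • ((A - (t : ℂ) • 1) * (A - (t : ℂ) • 1)) := by
  have hA : IsSelfAdjoint A := .of_nonneg hA0
  have hcont : Continuous (fun x : ℝ => x ^ p) := Real.continuous_rpow_const hp0.le
  generalize hc : p * L ^ (p - 1) = c
  have h1 : 0 ≤ cfc (fun s : ℝ => (s - t) * (s ^ p - t ^ p) - c * ((s - t) * (s - t))) A := by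
    refine cfc_nonneg fun s hs => ?_
    have hs0 : 0 ≤ s := spectrum_nonneg_of_nonneg hA0 hs
    have hsL : s ≤ L := (le_trans (Real.le_norm_self s)
      (IsometricContinuousFunctionalCalculus.norm_spectrum_le A hs)).trans hAL
    rw [← hc]
    exact aux_scalar2 hp0 hp1 ht0 hs0 hsL htL
  have hr : ∀ (r : ℝ) (X : H →L[ℂ] H), r • X = (r : ℂ) • X := fun r X => rfl
  have e1 : cfc (fun s : ℝ => s - t) A = A - (t : ℂ) • 1 := by
    rw [cfc_sub (fun s : ℝ => s) (fun _ => t) A, cfc_id' ℝ A, cfc_const t A,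
      Algebra.algebraMap_eq_smul_one, hr]
  have c2 : Continuous (fun s : ℝ => s ^ p - t ^ p) := hcont.sub continuous_const
  have e2 : cfc (fun s : ℝ => s ^ p - t ^ p) A = opRpow A p - ((t ^ p : ℝ) : ℂ) • 1 := by
    rw [cfc_sub (fun s : ℝ => s ^ p) (fun _ => t ^ p) A hcont.continuousOn, cfc_const (t ^ p) A,
      Algebra.algebraMap_eq_smul_one, hr, opRpow]
  have c1 : Continuous (fun s : ℝ => s - t) := by fun_prop
  rw [cfc_sub (fun s : ℝ => (s - t) * (s ^ p - t ^ p)) (fun s => c * ((s - t) * (s - t))) A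
      (c1.mul c2).continuousOn (continuous_const.mul (c1.mul c1)).continuousOn,
    cfc_mul (fun s : ℝ => s - t) (fun s => s ^ p - t ^ p) A c1.continuousOn c2.continuousOn,
    cfc_const_mul c (fun s : ℝ => (s - t) * (s - t)) A (c1.mul c1).continuousOn,
    cfc_mul (fun s : ℝ => s - t) (fun s : ℝ => s - t) A c1.continuousOn c1.continuousOn,
    e1, e2, hr] at h1
  exact h1

set_option maxHeartbeats 1000000 in
/-- the main operator estimate -/
theorem aux_op (T : H →L[ℂ] H) {p : ℝ} (hp0 : 0 < p) (hp1 : p ≤ 1) {R : ℝ} (hR : 0 < R) :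
    ∃ C : ℝ, 0 ≤ C ∧ ∀ (x : H) (z : ℂ), ‖z‖ ≤ R →
      (inner ℂ (opRpow (T * adjoint T) p x) x).re ≤ (inner ℂ (opRpow (adjoint T * T) p x) x).re →
      ‖adjoint T (T x) - ((‖z‖ ^ 2 : ℝ) : ℂ) • x‖ ^ 2 ≤ C * (‖x‖ * ‖T x - z • x‖) := by
  set A := adjoint T * T with hAdef
  set B := T * adjoint T with hBdef
  have hA0 : 0 ≤ A := star_mul_self_nonneg T
  have hB0 : 0 ≤ B := mul_star_self_nonneg T
  have hA : IsSelfAdjoint A := .of_nonneg hA0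
  have hB : IsSelfAdjoint B := .of_nonneg hB0
  set P := opRpow A p with hP
  set Q := opRpow B p with hQ
  have hint : Q * T = T * P := aux_intertwine A B T hA hB (by simp [hAdef, hBdef, mul_assoc]) _
    (Real.continuous_rpow_const hp0.le)
  set L := max ‖A‖ (R ^ 2) with hL
  have hL0 : 0 < L := lt_max_of_lt_right (by positivity)
  set c := p * L ^ (p - 1) with hc
  have hc0 : 0 < c := mul_pos hp0 (Real.rpow_pos_of_pos hL0 _)
  set C1 := ‖Q‖ * (R + ‖T‖) + (R ^ 2) ^ p * (2 * R) with hC1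
  have hC10 : 0 ≤ C1 := by positivity
  refine ⟨C1 / c, by positivity, fun x z hz hx => ?_⟩
  set t : ℝ := ‖z‖ ^ 2 with ht
  have ht0 : 0 ≤ t := by positivity
  have htR : t ≤ R ^ 2 := by rw [ht]; gcongr
  have hop := aux_cfc A hA0 hp0 hp1 (L := L) (le_max_left _ _) ht0 (htR.trans (le_max_right _ _))
  rw [← hP, ← hc] at hop
  set e := T x - z • x with he
  have hTx : T x = z • x + e := by rw [he]; abel
  set a := adjoint T (T x) - (t : ℂ) • x with ha
  have hax : (A - (t : ℂ) • 1) x = a := by simp [ha, hAdef]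
  have hsym : ∀ u v : H, inner ℂ ((A - (t : ℂ) • 1) u) v = inner ℂ u ((A - (t : ℂ) • 1) v) := by
    intro u v
    simp [hAdef, inner_sub_left, inner_sub_right, inner_smul_left, inner_smul_right,
      adjoint_inner_left, adjoint_inner_right]
  have h2 : 0 ≤ (inner ℂ (((A - (t : ℂ) • 1) * (P - ((t ^ p : ℝ) : ℂ) • 1)
      - (c : ℂ) • ((A - (t : ℂ) • 1) * (A - (t : ℂ) • 1))) x) x).re :=
    ((nonneg_iff_isPositive _).1 hop).re_inner_nonneg_left x
  have h3 : c * ‖a‖ ^ 2 ≤ (inner ℂ (P x) (adjoint T (T x))).re - t * (inner ℂ (P x) x).re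
      - t ^ p * (inner ℂ x a).re := by
    have : (inner ℂ (((A - (t : ℂ) • 1) * (P - ((t ^ p : ℝ) : ℂ) • 1)
      - (c : ℂ) • ((A - (t : ℂ) • 1) * (A - (t : ℂ) • 1))) x) x)
      = inner ℂ (P x) (adjoint T (T x)) - t * inner ℂ (P x) x
      - ((t ^ p : ℝ) : ℂ) * inner ℂ x a - c * inner ℂ a a := by
      rw [sub_apply, mul_apply_eq_comp, _root_.smul_apply,
        mul_apply_eq_comp, inner_sub_left, inner_smul_left, hsym, hsym, hax]
      rw [sub_apply, inner_sub_left, _root_.smul_apply, inner_smul_left,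
        Complex.conj_ofReal, Complex.conj_ofReal]
      rw [one_apply_eq_self]
      congr 2
      rw [ha, inner_sub_right, inner_smul_right]
    rw [this] at h2
    rw [inner_self_eq_norm_sq_to_K] at h2
    simp only [Complex.sub_re, Complex.re_ofReal_mul] at h2
    have h8 : (((‖a‖ : ℝ) : ℂ) ^ 2).re = ‖a‖ ^ 2 := by
      rw [← Complex.ofReal_pow, Complex.ofReal_re]
    have h9 := h2
    simp only [Complex.coe_algebraMap, h8] at h9
    linarith
  have h4 : (inner ℂ (P x) (adjoint T (T x))).re ≤
      t * (inner ℂ (Q x) x).re + ‖Q‖ * (R + ‖T‖) * (‖x‖ * ‖e‖) := by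
    have i1 : inner ℂ (P x) (adjoint T (T x)) = inner ℂ (Q (T x)) (T x) := by
      rw [adjoint_inner_right]
      have := congrArg (fun X : H →L[ℂ] H => X x) hint
      simp only [mul_apply_eq_comp] at this
      rw [this]
    have i2 : inner ℂ (Q (T x)) (T x) = (t : ℂ) * inner ℂ (Q x) x + inner ℂ (Q (z • x)) e
        + inner ℂ (Q e) (T x) := by
      conv_lhs => rw [hTx, map_add, inner_add_left, ← hTx]
      congr 1
      conv_lhs => rw [hTx, inner_add_right]
      congr 1
      rw [map_smul, inner_smul_left, inner_smul_right, ← mul_assoc, ht, Complex.conj_mul']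
      push_cast
      rfl
    have b1 : (inner ℂ (Q (z • x)) e).re ≤ ‖Q‖ * (R * ‖x‖) * ‖e‖ := by
      calc _ ≤ ‖inner ℂ (Q (z • x)) e‖ := Complex.re_le_norm _
        _ ≤ ‖Q (z • x)‖ * ‖e‖ := norm_inner_le_norm _ _
        _ ≤ (‖Q‖ * ‖z • x‖) * ‖e‖ := by gcongr; exact le_opNorm _ _
        _ ≤ _ := by rw [norm_smul]; gcongr
    have b2 : (inner ℂ (Q e) (T x)).re ≤ ‖Q‖ * ‖e‖ * (‖T‖ * ‖x‖) := by
      calc _ ≤ ‖inner ℂ (Q e) (T x)‖ := Complex.re_le_norm _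
        _ ≤ ‖Q e‖ * ‖T x‖ := norm_inner_le_norm _ _
        _ ≤ _ := by gcongr <;> exact le_opNorm _ _
    rw [i1, i2]
    simp only [Complex.add_re, Complex.re_ofReal_mul]
    linarith
  have h5 : -(inner ℂ x a).re ≤ 2 * R * (‖x‖ * ‖e‖) := by
    have i1 : (inner ℂ x a).re = ‖T x‖ ^ 2 - t * ‖x‖ ^ 2 := by
      rw [ha, inner_sub_right, inner_smul_right, adjoint_inner_right, inner_self_eq_norm_sq_to_K,
        inner_self_eq_norm_sq_to_K]
      simp only [Complex.sub_re, Complex.re_ofReal_mul, Complex.coe_algebraMap,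
        ← Complex.ofReal_pow, Complex.ofReal_re]
    have i2 : ‖z‖ * ‖x‖ ≤ ‖T x‖ + ‖e‖ := by
      rw [← norm_smul]
      have : z • x = T x - e := by rw [he]; abel
      rw [this]; exact norm_sub_le _ _
    rw [i1, ht]
    have hn := norm_nonneg (T x)
    have hne := norm_nonneg e
    have hzx : 0 ≤ ‖z‖ * ‖x‖ := by positivity
    have i3 : ‖z‖ * ‖x‖ * ‖e‖ ≤ R * ‖x‖ * ‖e‖ := by gcongr
    rcases le_total (‖z‖ * ‖x‖) ‖e‖ with h | h
    · nlinarith [mul_le_mul_of_nonneg_left h hzx, mul_nonneg hzx hne]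
    · nlinarith [mul_self_le_mul_self (sub_nonneg.2 h) (sub_le_iff_le_add.2 i2), mul_nonneg hzx hne]
  have h6 : t ^ p * -(inner ℂ x a).re ≤ (R ^ 2) ^ p * (2 * R * (‖x‖ * ‖e‖)) := by
    have : t ^ p ≤ (R ^ 2) ^ p := Real.rpow_le_rpow ht0 htR hp0.le
    calc _ ≤ t ^ p * (2 * R * (‖x‖ * ‖e‖)) :=
          mul_le_mul_of_nonneg_left h5 (Real.rpow_nonneg ht0 _)
      _ ≤ _ := by gcongr
  have h7 : t * (inner ℂ (Q x) x).re ≤ t * (inner ℂ (P x) x).re :=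
    mul_le_mul_of_nonneg_left hx ht0
  rw [div_mul_eq_mul_div, le_div_iff₀ hc0]
  rw [hC1]
  linarith

theorem aux_op2 (T : H →L[ℂ] H) {p : ℝ} (hp0 : 0 < p) (hp1 : p ≤ 1) {R δ : ℝ} (hR : 0 < R)
    (hδ : 0 < δ) :
    ∃ C : ℝ, 0 ≤ C ∧ ∀ (x : H) (z : ℂ), δ ≤ ‖z‖ → ‖z‖ ≤ R →
      (inner ℂ (opRpow (T * adjoint T) p x) x).re ≤ (inner ℂ (opRpow (adjoint T * T) p x) x).re →
      ‖adjoint T x - (starRingEnd ℂ z) • x‖ ^ 2 ≤ C * (‖x‖ * ‖T x - z • x‖) := by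
  obtain ⟨C, hC, h⟩ := aux_op T hp0 hp1 hR
  refine ⟨(2 * C + 2 * ‖T‖ ^ 2 * (‖T‖ + R)) / δ ^ 2, by positivity, fun x z hz1 hz2 hx => ?_⟩
  have h1 := h x z hz2 hx
  set a := adjoint T (T x) - ((‖z‖ ^ 2 : ℝ) : ℂ) • x with ha
  set e := T x - z • x with he
  set b := adjoint T x - (starRingEnd ℂ z) • x with hb
  have h2 : z • b = a - adjoint T e := by
    rw [ha, hb, he, smul_sub, smul_smul, Complex.mul_conj', map_sub, map_smul]
    push_cast
    abel
  have h3 : ‖z‖ * ‖b‖ ≤ ‖a‖ + ‖T‖ * ‖e‖ := by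
    rw [← norm_smul, h2]
    refine (norm_sub_le _ _).trans (add_le_add_right ?_ _)
    refine (le_opNorm _ _).trans ?_
    rw [LinearIsometryEquiv.norm_map]
  have h4 : ‖e‖ ≤ (‖T‖ + R) * ‖x‖ := by
    refine (norm_sub_le _ _).trans ?_
    rw [add_mul, norm_smul]
    gcongr
    exact le_opNorm _ _
  have h5 : δ * ‖b‖ ≤ ‖a‖ + ‖T‖ * ‖e‖ := le_trans (by gcongr) h3
  have h6 : (δ * ‖b‖) ^ 2 ≤ 2 * ‖a‖ ^ 2 + 2 * (‖T‖ * ‖e‖) ^ 2 := by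
    have : (δ * ‖b‖) ^ 2 ≤ (‖a‖ + ‖T‖ * ‖e‖) ^ 2 := by gcongr
    nlinarith [sq_nonneg (‖a‖ - ‖T‖ * ‖e‖)]
  have h7 : ‖e‖ * ‖e‖ ≤ (‖T‖ + R) * ‖x‖ * ‖e‖ := by gcongr
  have h8 := mul_le_mul_of_nonneg_left h7 (sq_nonneg ‖T‖)
  rw [div_mul_eq_mul_div, le_div_iff₀ (by positivity)]
  nlinarith

theorem aux_analytic (T : H →L[ℂ] H) (g : ℂ → H) (z0 : ℂ) {ρ ε C : ℝ} (hρ : 0 < ρ) (hε : 0 ≤ ε)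
    (hC : 0 ≤ C) (hg : AnalyticOnNhd ℂ g (Metric.closedBall z0 ρ))
    (h1 : ∀ z ∈ Metric.closedBall z0 ρ, ‖T (g z) - z • g z‖ ≤ ε)
    (h2 : ∀ z ∈ Metric.closedBall z0 ρ,
      ‖adjoint T (g z) - (starRingEnd ℂ z) • g z‖ ^ 2 ≤ C * (‖g z‖ * ε)) :
    ∀ z ∈ Metric.closedBall z0 (ρ / 2), ‖g z‖ ≤ 4 / ρ ^ 2 * ((256 * C + 4 * ρ) * ε) := by
  have hcont : ContinuousOn (fun w => (ρ - dist w z0) ^ 2 * ‖g w‖) (Metric.closedBall z0 ρ) := by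
    have := hg.continuousOn
    fun_prop
  obtain ⟨w, hw, hmax⟩ := (isCompact_closedBall z0 ρ).exists_isMaxOn
    ⟨z0, Metric.mem_closedBall_self hρ.le⟩ hcont
  have hmax' : ∀ z ∈ Metric.closedBall z0 ρ,
      (ρ - dist z z0) ^ 2 * ‖g z‖ ≤ (ρ - dist w z0) ^ 2 * ‖g w‖ := fun z hz => hmax hz
  have hN : (ρ - dist w z0) ^ 2 * ‖g w‖ ≤ (256 * C + 4 * ρ) * ε := by
    have hR0 : 0 ≤ (256 * C + 4 * ρ) * ε := by positivity
    by_cases hd : ρ - dist w z0 = 0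
    · rw [hd]; simpa using hR0
    by_cases hG0 : g w = 0
    · rw [hG0]; simpa using hR0
    have hG : 0 < ‖g w‖ := norm_pos_iff.2 hG0
    have hdw : dist w z0 ≤ ρ := hw
    have hd0 : 0 < ρ - dist w z0 := lt_of_le_of_ne (by linarith) (Ne.symm hd)
    obtain ⟨r, hr⟩ : ∃ r, r = (ρ - dist w z0) / 2 := ⟨_, rfl⟩
    have hr0 : 0 < r := by rw [hr]; linarith
    have hrd : ρ - dist w z0 = 2 * r := by rw [hr]; ring
    have hsub : Metric.closedBall w r ⊆ Metric.closedBall z0 ρ := by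
      apply Metric.closedBall_subset_closedBall'
      linarith
    have hb := h2 w hw
    obtain ⟨b, hbdef⟩ : ∃ b, b = ‖adjoint T (g w) - (starRingEnd ℂ w) • g w‖ := ⟨_, rfl⟩
    have hb0 : 0 ≤ b := by rw [hbdef]; positivity
    have hdiff : DifferentiableOn ℂ (fun z => inner ℂ (g w) (g z)) (Metric.closedBall w r) := by
      have : DifferentiableOn ℂ g (Metric.closedBall w r) :=
        hg.differentiableOn.mono hsub
      exact (innerSL ℂ (g w)).differentiable.comp_differentiableOn this
    have hkey : ‖inner ℂ (g w) (g w)‖ ≤ (4 * b * ‖g w‖ + ε * ‖g w‖) / r := by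
      refine Complex.norm_le_of_forall_mem_frontier_norm_le (U := Metric.ball w r)
        (f := fun z => inner ℂ (g w) (g z)) Metric.isBounded_ball
        (hdiff.diffContOnCl_ball subset_rfl) ?_ (subset_closure (Metric.mem_ball_self hr0))
      intro z hz
      have hz' : dist z w = r := Metric.frontier_ball_subset_sphere hz
      have hzb : z ∈ Metric.closedBall z0 ρ := hsub hz'.le
      have hgz : ‖g z‖ ≤ 4 * ‖g w‖ := by
        have i1 := hmax' z hzb
        have i2 : r ≤ ρ - dist z z0 := by
          have := dist_triangle z w z0
          linarith
        have i3 : r ^ 2 * ‖g z‖ ≤ (ρ - dist z z0) ^ 2 * ‖g z‖ := by gcongr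
        rw [hrd] at i1
        have i4 : r ^ 2 * ‖g z‖ ≤ r ^ 2 * (4 * ‖g w‖) := by linarith
        exact le_of_mul_le_mul_left i4 (by positivity)
      have e1 : (z - w) * inner ℂ (g w) (g z) =
          inner ℂ (adjoint T (g w) - (starRingEnd ℂ w) • g w) (g z)
          - inner ℂ (g w) (T (g z) - z • g z) := by
        rw [inner_sub_left, inner_sub_right, inner_smul_left, inner_smul_right,
          adjoint_inner_left, Complex.conj_conj]
        ring
      have e2 : r * ‖inner ℂ (g w) (g z)‖ ≤ 4 * b * ‖g w‖ + ε * ‖g w‖ := by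
        have : r = ‖z - w‖ := by rw [← hz', dist_eq_norm]
        rw [this, ← norm_mul, e1]
        refine (norm_sub_le _ _).trans (add_le_add ?_ ?_)
        · refine (norm_inner_le_norm _ _).trans ?_
          rw [← hbdef]
          calc b * ‖g z‖ ≤ b * (4 * ‖g w‖) := by gcongr
            _ = _ := by ring
        · refine (norm_inner_le_norm _ _).trans ?_
          rw [mul_comm]
          gcongr
          exact h1 z hzb
      rw [le_div_iff₀ hr0]
      linarith
    have hk2 : r * ‖g w‖ ≤ 4 * b + ε := by
      rw [inner_self_eq_norm_sq_to_K, norm_pow, le_div_iff₀ hr0] at hkey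
      simp only [Complex.coe_algebraMap, Complex.norm_real, norm_norm] at hkey
      have : r * ‖g w‖ * ‖g w‖ ≤ (4 * b + ε) * ‖g w‖ := by nlinarith
      exact le_of_mul_le_mul_right this hG
    rw [hrd]
    rw [← hbdef] at hb
    have hrρ : 2 * r ≤ ρ := by have := dist_nonneg (x := w) (y := z0); linarith
    rcases le_total (4 * b) ε with h | h
    · have i1 : r * ‖g w‖ ≤ 2 * ε := by linarith
      have i2 := mul_le_mul_of_nonneg_left i1 hr0.le
      have i3 := mul_le_mul_of_nonneg_right hrρ hε
      have i4 := mul_nonneg hC hε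
      nlinarith
    · have i1 : r * ‖g w‖ ≤ 8 * b := by linarith
      have i2 : (r * ‖g w‖) ^ 2 ≤ (8 * b) ^ 2 := by gcongr
      have i3 : (r ^ 2 * ‖g w‖) * ‖g w‖ ≤ (64 * (C * ε)) * ‖g w‖ := by nlinarith
      have i4 := le_of_mul_le_mul_right i3 hG
      have i5 := mul_nonneg hρ.le hε
      nlinarith
  intro z hz
  have hz' : dist z z0 ≤ ρ / 2 := hz
  have i1 := (hmax' z (Metric.closedBall_subset_closedBall (by linarith) hz)).trans hN
  have i2 : (ρ / 2) ^ 2 * ‖g z‖ ≤ (ρ - dist z z0) ^ 2 * ‖g z‖ := by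
    gcongr
    linarith
  rw [div_mul_eq_mul_div, le_div_iff₀ (by positivity)]
  nlinarith

theorem aux_pow (T : H →L[ℂ] H) {R : ℝ} (hR : 0 < R) (k : ℕ) :
    ∃ C : ℝ, 0 ≤ C ∧ ∀ (x : H) (z : ℂ), ‖z‖ ≤ R →
      ‖(T ^ k) x - z ^ k • x‖ ≤ C * ‖T x - z • x‖ := by
  induction k with
  | zero => exact ⟨0, le_rfl, fun x z _ => by simp⟩
  | succ k ih =>
    obtain ⟨C, hC, h⟩ := ih
    refine ⟨‖T ^ k‖ + R * C, by positivity, fun x z hz => ?_⟩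
    have e : (T ^ (k + 1)) x - z ^ (k + 1) • x =
        (T ^ k) (T x - z • x) + z • ((T ^ k) x - z ^ k • x) := by
      rw [pow_succ, mul_apply_eq_comp, map_sub, map_smul, smul_sub, smul_smul, ← pow_succ']
      abel
    rw [e, add_mul]
    refine (norm_add_le _ _).trans (add_le_add (le_opNorm _ _) ?_)
    rw [norm_smul, mul_assoc]
    exact mul_le_mul hz (h x z hz) (norm_nonneg _) hR.le

theorem aux_quasi (T : H →L[ℂ] H) {p : ℝ} {k : ℕ} (hT : PKQuasihyponormal T p k) (y : H) :
    (inner ℂ (opRpow (T * adjoint T) p ((T ^ k) y)) ((T ^ k) y)).re ≤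
      (inner ℂ (opRpow (adjoint T * T) p ((T ^ k) y)) ((T ^ k) y)).re := by
  have h := ((nonneg_iff_isPositive _).1 hT).re_inner_nonneg_left y
  have e : (adjoint T) ^ k = adjoint (T ^ k) := (star_pow T k).symm
  rw [e, mul_apply_eq_comp, mul_apply_eq_comp, adjoint_inner_left, sub_apply, inner_sub_left,
    map_sub] at h
  exact sub_nonneg.1 h

theorem aux_local (T : H →L[ℂ] H) {p : ℝ} (hp0 : 0 < p) (hp1 : p ≤ 1) {k : ℕ}
    (hT : PKQuasihyponormal T p k) (z0 : ℂ) {ρ : ℝ} (hρ : 0 < ρ) (hz0 : 2 * ρ ≤ ‖z0‖) :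
    ∃ M : ℝ, 0 ≤ M ∧ ∀ (f : ℂ → H) (ε : ℝ), 0 ≤ ε →
      AnalyticOnNhd ℂ f (Metric.closedBall z0 ρ) →
      (∀ z ∈ Metric.closedBall z0 ρ, ‖T (f z) - z • f z‖ ≤ ε) →
      ∀ z ∈ Metric.closedBall z0 (ρ / 2), ‖f z‖ ≤ M * ε := by
  have hR : 0 < ‖z0‖ + ρ := by positivity
  obtain ⟨C, hC, hop⟩ := aux_op2 T hp0 hp1 hR hρ
  obtain ⟨C', hC', hpow⟩ := aux_pow T hR k
  have hball : ∀ z ∈ Metric.closedBall z0 ρ, ρ ≤ ‖z‖ ∧ ‖z‖ ≤ ‖z0‖ + ρ := by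
    intro z hz
    have hz' : ‖z - z0‖ ≤ ρ := by simpa [dist_eq_norm] using hz
    have a1 := norm_sub_norm_le z z0
    have a2 := norm_sub_norm_le z0 z
    rw [norm_sub_rev] at a2
    constructor <;> linarith
  refine ⟨(4 / ρ ^ 2 * ((256 * C + 4 * ρ) * ‖T ^ k‖) + C') / ρ ^ k, by positivity, ?_⟩
  intro f ε hε hf h1 z hz
  have hcomm : ∀ z, T ((T ^ k) (f z)) - z • (T ^ k) (f z) = (T ^ k) (T (f z) - z • f z) := by
    intro z
    rw [map_sub, map_smul, ← mul_apply_eq_comp, ← mul_apply_eq_comp, ← pow_succ, ← pow_succ']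
  have hb1 : ∀ z ∈ Metric.closedBall z0 ρ,
      ‖T ((T ^ k) (f z)) - z • (T ^ k) (f z)‖ ≤ ‖T ^ k‖ * ε := by
    intro z hz
    rw [hcomm]
    refine (le_opNorm _ _).trans ?_
    gcongr
    exact h1 z hz
  have hA := aux_analytic T (fun z => (T ^ k) (f z)) z0 (ε := ‖T ^ k‖ * ε) (C := C) hρ
    (by positivity) hC (fun z hz => ((T ^ k).analyticAt _).comp (hf z hz)) hb1
    (fun z hz => (hop _ z (hball z hz).1 (hball z hz).2 (aux_quasi T hT _)).trans (by
      gcongr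
      exact hb1 z hz)) z hz
  have hzz := Metric.closedBall_subset_closedBall (by linarith : ρ / 2 ≤ ρ) hz
  have hP := hpow (f z) z (hball z hzz).2
  have hk1 : ‖z ^ k • f z‖ ≤ ‖(T ^ k) (f z)‖ + ‖(T ^ k) (f z) - z ^ k • f z‖ := by
    have : z ^ k • f z = (T ^ k) (f z) - ((T ^ k) (f z) - z ^ k • f z) := by abel
    conv_lhs => rw [this]
    exact norm_sub_le _ _
  have hk2 : C' * ‖T (f z) - z • f z‖ ≤ C' * ε := by gcongr; exact h1 z hzz
  have hk3 : ρ ^ k * ‖f z‖ ≤ ‖z ^ k • f z‖ := by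
    rw [norm_smul, norm_pow]
    gcongr
    exact (hball z hzz).1
  rw [div_mul_eq_mul_div, le_div_iff₀ (by positivity)]
  linarith

theorem aux_main (T : H →L[ℂ] H) {p : ℝ} (hp0 : 0 < p) (hp1 : p ≤ 1) {k : ℕ}
    (hT : PKQuasihyponormal T p k) : HasBishopBeta T := by
  intro D hD f hf h
  have hD' : IsOpen (D \ {0}) := hD.sdiff isClosed_singleton
  have step1 : TendstoLocallyUniformlyOn (fun n z => f n z) 0 atTop (D \ {0}) := by
    rw [Metric.tendstoLocallyUniformlyOn_iff]
    intro ε hε z0 hz0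
    obtain ⟨ρ1, hρ1, hsub1⟩ := Metric.nhds_basis_closedBall.mem_iff.1 (hD.mem_nhds hz0.1)
    have hz0' : 0 < ‖z0‖ := norm_pos_iff.2 hz0.2
    obtain ⟨ρ, hρdef⟩ : ∃ ρ, ρ = min ρ1 (‖z0‖ / 2) := ⟨_, rfl⟩
    have hρ : 0 < ρ := by rw [hρdef]; exact lt_min hρ1 (by linarith)
    have hρz : 2 * ρ ≤ ‖z0‖ := by
      have := min_le_right ρ1 (‖z0‖ / 2)
      rw [hρdef]; linarith
    have hsub : Metric.closedBall z0 ρ ⊆ D :=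
      (Metric.closedBall_subset_closedBall (by rw [hρdef]; exact min_le_left _ _)).trans hsub1
    obtain ⟨M, hM, hloc⟩ := aux_local T hp0 hp1 hT z0 hρ hρz
    refine ⟨Metric.closedBall z0 (ρ / 2), mem_nhdsWithin_of_mem_nhds
      (Metric.closedBall_mem_nhds _ (by linarith)), ?_⟩
    have hu := h _ hsub (isCompact_closedBall _ _)
    rw [Metric.tendstoUniformlyOn_iff] at hu
    have hη : 0 < ε / (M + 1) := by positivity
    filter_upwards [hu _ hη] with n hn z hz
    have := hloc (f n) (ε / (M + 1)) hη.le ((hf n).mono hsub)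
      (fun z hz => by
        have h3 := (hn z hz).le
        rwa [Pi.zero_apply, dist_zero_left] at h3) z hz
    simp only [Pi.zero_apply, dist_zero_left]
    refine this.trans_lt ?_
    rw [← mul_div_assoc, div_lt_iff₀ (by positivity)]
    linarith
  have hstep1 := (tendstoLocallyUniformlyOn_iff_forall_isCompact hD').1 step1
  refine (tendstoLocallyUniformlyOn_iff_forall_isCompact hD).1 ?_
  rw [Metric.tendstoLocallyUniformlyOn_iff]
  intro ε hε z0 hz0
  by_cases hz : z0 = 0
  · subst hz
    obtain ⟨ρ, hρ, hsub⟩ := Metric.nhds_basis_closedBall.mem_iff.1 (hD.mem_nhds hz0)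
    refine ⟨Metric.ball 0 ρ, mem_nhdsWithin_of_mem_nhds (Metric.ball_mem_nhds _ hρ), ?_⟩
    have hu := hstep1 (Metric.sphere 0 ρ) (fun z hz => ⟨hsub (Metric.sphere_subset_closedBall hz),
      fun h0 => by
        have h0' : z = 0 := h0
        subst h0'
        simp at hz
        exact hρ.ne hz⟩) (isCompact_sphere _ _)
    rw [Metric.tendstoUniformlyOn_iff] at hu
    filter_upwards [hu _ (half_pos hε)] with n hn z hz
    simp only [Pi.zero_apply, dist_zero_left]
    refine lt_of_le_of_lt ?_ (half_lt_self hε)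
    refine Complex.norm_le_of_forall_mem_frontier_norm_le (U := Metric.ball 0 ρ)
      (f := f n) Metric.isBounded_ball
      (DifferentiableOn.diffContOnCl_ball (((hf n).differentiableOn).mono hsub) subset_rfl)
      ?_ (subset_closure hz)
    intro w hw
    have := hn w (Metric.frontier_ball_subset_sphere hw)
    simpa using this.le
  · rw [Metric.tendstoLocallyUniformlyOn_iff] at step1
    obtain ⟨t, ht, hn⟩ := step1 ε hε z0 ⟨hz0, hz⟩
    refine ⟨t, ?_, hn⟩
    rw [hD'.nhdsWithin_eq ⟨hz0, hz⟩] at ht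
    exact mem_nhdsWithin_of_mem_nhds ht

end

theorem pkQuasihyponormal_hasBishopBeta {H : Type*} [NormedAddCommGroup H]
    [InnerProductSpace ℂ H] [CompleteSpace H] [TopologicalSpace.SeparableSpace H]
    (hinf : ¬ FiniteDimensional ℂ H)
    (T : H →L[ℂ] H) (p : ℝ) (hp0 : 0 < p) (hp1 : p ≤ 1) (k : ℕ) (hk : 0 < k)
    (hT : PKQuasihyponormal T p k) : HasBishopBeta T := by
  exact aux_main T hp0 hp1 hT
end

section
/- Let H be a separable infinite-dimensional complex Hilbert space and let T ∈ B(H) be a (p,k)-quasihyponormal operator for some 0 < p ≤ 1 and positive integer k. Then T has the single valued extension property. -/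
open ContinuousLinearMap Filter

set_option synthInstance.maxHeartbeats 400000

open scoped ComplexConjugate

theorem scalar_ineq (p : ℝ) (hp0 : 0 < p) (hp1 : p ≤ 1) (s a M : ℝ) (hs : 0 ≤ s) (ha : 0 ≤ a)
    (hsM : s ≤ M) (haM : a ≤ M) :
    p * (s - a) ^ 2 ≤ M ^ (1 - p) * ((s ^ p - a ^ p) * (s - a)) := by
  have key : ∀ u v : ℝ, 0 ≤ v → v ≤ u → u ≤ M →
      p * (u - v) ^ 2 ≤ M ^ (1 - p) * ((u ^ p - v ^ p) * (u - v)) := by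
    intro u v hv hvu huM
    have hu : 0 ≤ u := hv.trans hvu
    have h1 : u ^ (1 - p) * v ^ p ≤ (1 - p) * u + p * v :=
      Real.geom_mean_le_arith_mean2_weighted (by linarith) hp0.le hu hv (by ring)
    have h2 : u ^ (1 - p) * u ^ p = u := by
      rw [← Real.rpow_add' hu (by norm_num)]; norm_num
    have h3 : u ^ (1 - p) ≤ M ^ (1 - p) := Real.rpow_le_rpow hu huM (by linarith)
    have h4 : 0 ≤ u ^ p - v ^ p := sub_nonneg.2 (Real.rpow_le_rpow hv hvu hp0.le)
    have h5 : p * (u - v) ≤ M ^ (1 - p) * (u ^ p - v ^ p) := by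
      have := mul_le_mul_of_nonneg_right h3 h4
      nlinarith
    have := mul_le_mul_of_nonneg_right h5 (sub_nonneg.2 hvu)
    nlinarith
  rcases le_total a s with h | h
  · exact key s a ha h hsM
  · have := key a s hs h haM
    nlinarith

section
variable {H : Type*} [NormedAddCommGroup H] [InnerProductSpace ℂ H] [CompleteSpace H]

theorem clm_mul_app (S T : H →L[ℂ] H) (x : H) : (S * T) x = S (T x) := rfl

theorem aeval_intertwine (S T : H →L[ℂ] H) (P : Polynomial ℝ) :
    Polynomial.aeval (T * S) P * T = T * Polynomial.aeval (S * T) P := by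
  induction P using Polynomial.induction_on' with
  | add p q hp hq => simp only [map_add, add_mul, mul_add, hp, hq]
  | monomial n c =>
    simp only [Polynomial.aeval_monomial]
    have : (T * S) ^ n * T = T * (S * T) ^ n := by
      induction n with
      | zero => simp
      | succ n ih => rw [pow_succ', pow_succ', mul_assoc, ih]; simp only [mul_assoc]
    rw [mul_assoc, this, ← mul_assoc, ← mul_assoc, Algebra.commutes]

theorem cfc_intertwine (T : H →L[ℂ] H) (f : ℝ → ℝ) (hf : Continuous f) :
    cfc f (T * adjoint T) * T = T * cfc f (adjoint T * T) := by
  have hA : IsSelfAdjoint (adjoint T * T) := IsSelfAdjoint.star_mul_self T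
  have hB : IsSelfAdjoint (T * adjoint T) := IsSelfAdjoint.mul_star_self T
  obtain ⟨M, hM⟩ : ∃ M : ℝ, ∀ x ∈ spectrum ℝ (adjoint T * T) ∪ spectrum ℝ (T * adjoint T),
      x ∈ Set.Icc (-M) M := by
    refine ⟨max ‖adjoint T * T‖ ‖T * adjoint T‖ * ‖(1 : H →L[ℂ] H)‖, fun x hx => ?_⟩
    rw [Set.mem_Icc, ← abs_le, ← Real.norm_eq_abs]
    rcases hx with hx | hx
    · refine (spectrum.norm_le_norm_mul_of_mem hx).trans ?_
      gcongr; exact le_max_left _ _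
    · refine (spectrum.norm_le_norm_mul_of_mem hx).trans ?_
      gcongr; exact le_max_right _ _
  rw [← sub_eq_zero, ← norm_le_zero_iff]
  refine le_of_forall_pos_le_add fun ε hε => ?_
  obtain ⟨P, hP⟩ := exists_polynomial_near_of_continuousOn (-M) M f hf.continuousOn
    (ε / (2 * (‖T‖ + 1))) (by positivity)
  have key : ∀ A : H →L[ℂ] H, IsSelfAdjoint A → (∀ x ∈ spectrum ℝ A, x ∈ Set.Icc (-M) M) →
      ‖cfc f A - Polynomial.aeval A P‖ ≤ ε / (2 * (‖T‖ + 1)) := by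
    intro A hA hs
    rw [← cfc_polynomial P A, ← cfc_sub f _ A hf.continuousOn P.continuous.continuousOn]
    refine norm_cfc_le (by positivity) fun x hx => ?_
    have := hP x (hs x hx)
    rw [Real.norm_eq_abs, abs_sub_comm]; exact this.le
  have k1 := key _ hA fun x hx => hM x (Or.inl hx)
  have k2 := key _ hB fun x hx => hM x (Or.inr hx)
  have e : cfc f (T * adjoint T) * T - T * cfc f (adjoint T * T)
      = (cfc f (T * adjoint T) - Polynomial.aeval (T * adjoint T) P) * T
        - T * (cfc f (adjoint T * T) - Polynomial.aeval (adjoint T * T) P) := by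
    rw [sub_mul, mul_sub, aeval_intertwine]; abel
  rw [e, zero_add]
  refine (norm_sub_le _ _).trans ?_
  refine (add_le_add (norm_mul_le _ _) (norm_mul_le _ _)).trans ?_
  have hT : 0 ≤ ‖T‖ := norm_nonneg _
  calc _ ≤ ε / (2 * (‖T‖ + 1)) * ‖T‖ + ‖T‖ * (ε / (2 * (‖T‖ + 1))) := by gcongr
    _ = ε * (‖T‖ / (‖T‖ + 1)) := by field_simp; ring
    _ ≤ ε * 1 := by
      gcongr
      rw [div_le_one (by positivity)]; linarith
    _ = ε := mul_one _

theorem eig_of_form (A : H →L[ℂ] H) (hA : 0 ≤ A) (p : ℝ) (hp0 : 0 < p) (hp1 : p ≤ 1)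
    (a : ℝ) (ha : 0 ≤ a) (x : H) (h0 : inner ℂ x (A x - (a : ℂ) • x) = 0)
    (h1 : (inner ℂ (opRpow A p x) (A x - (a : ℂ) • x)).re ≤ 0) : A x = (a : ℂ) • x := by
  have hsa : IsSelfAdjoint A := IsSelfAdjoint.of_nonneg hA
  obtain ⟨M, haM, hM⟩ : ∃ M : ℝ, a ≤ M ∧ ∀ s ∈ spectrum ℝ A, s ≤ M := by
    refine ⟨max a (‖A‖ * ‖(1 : H →L[ℂ] H)‖), le_max_left _ _, fun s hs => ?_⟩
    exact (le_abs_self s).trans ((spectrum.norm_le_norm_mul_of_mem hs).trans (le_max_right _ _))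
  have hc : Continuous fun s : ℝ => s ^ p := Real.continuous_rpow_const hp0.le
  have hmono : cfc (fun s : ℝ => p * (s - a) ^ 2) A
      ≤ cfc (fun s : ℝ => M ^ (1 - p) * ((s ^ p - a ^ p) * (s - a))) A := by
    refine cfc_mono (fun s hs => ?_) (by fun_prop) (by fun_prop)
    exact scalar_ineq p hp0 hp1 s a M (spectrum_nonneg_of_nonneg hA hs) ha (hM s hs) haM
  have e1 : cfc (fun s : ℝ => s - a) A = A - algebraMap ℝ _ a := by
    rw [cfc_sub (fun s : ℝ => s) (fun _ => a) A, cfc_id' ℝ A, cfc_const a A]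
  have e2 : cfc (fun s : ℝ => s ^ p - a ^ p) A = opRpow A p - algebraMap ℝ _ (a ^ p) := by
    rw [cfc_sub (fun s : ℝ => s ^ p) (fun _ => a ^ p) A hc.continuousOn, cfc_const _ A]; rfl
  rw [cfc_const_mul p (fun s : ℝ => (s - a) ^ 2) A (by fun_prop),
    cfc_pow (fun s : ℝ => s - a) 2 A, 
    cfc_const_mul (M ^ (1 - p)) (fun s : ℝ => (s ^ p - a ^ p) * (s - a)) A (by fun_prop),
    cfc_mul (fun s : ℝ => s ^ p - a ^ p) (fun s : ℝ => s - a) A (by fun_prop) (by fun_prop)] at hmono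
  have s1 : IsSelfAdjoint (cfc (fun s : ℝ => s - a) A) := cfc_predicate _ _
  have s2 : IsSelfAdjoint (cfc (fun s : ℝ => s ^ p - a ^ p) A) := cfc_predicate _ _
  have v1 : cfc (fun s : ℝ => s - a) A x = A x - (a : ℂ) • x := by
    rw [e1]; simp [Algebra.algebraMap_eq_smul_one]
  have v2 : cfc (fun s : ℝ => s ^ p - a ^ p) A x = opRpow A p x - ((a ^ p : ℝ) : ℂ) • x := by
    rw [e2]; simp [Algebra.algebraMap_eq_smul_one]
  have sym : ∀ S : H →L[ℂ] H, IsSelfAdjoint S → ∀ u v : H, inner ℂ (S u) v = inner ℂ u (S v) :=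
    fun S hS u v => hS.isSymmetric u v
  have hpos := ((ContinuousLinearMap.le_def _ _).1 hmono).re_inner_nonneg_right x
  simp only [sub_apply, inner_sub_right, smul_apply, pow_two, clm_mul_app, 
    ← Complex.coe_smul, inner_smul_right] at hpos
  rw [← sym _ s1, ← sym _ s2, v1, v2, inner_sub_left, inner_smul_left, h0,
    inner_self_eq_norm_sq_to_K] at hpos
  set y := A x - (a : ℂ) • x
  have hMp : 0 ≤ M ^ (1 - p) := Real.rpow_nonneg (ha.trans haM) _
  have hn : p * ‖y‖ ^ 2 ≤ M ^ (1 - p) * (inner ℂ (opRpow A p x) y).re := by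
    have e3 : (((‖y‖ : ℝ) : ℂ) ^ 2) = ((‖y‖ ^ 2 : ℝ) : ℂ) := by push_cast; rfl
    simp only [mul_zero, sub_zero, map_sub, RCLike.re_to_complex, Complex.coe_algebraMap, e3,
      Complex.re_ofReal_mul, Complex.ofReal_re] at hpos
    linarith
  have : p * ‖y‖ ^ 2 ≤ 0 := hn.trans (mul_nonpos_of_nonneg_of_nonpos hMp h1)
  have : ‖y‖ = 0 := by
    by_contra hne
    have : 0 < ‖y‖ ^ 2 := by positivity
    nlinarith
  exact sub_eq_zero.1 (norm_eq_zero.1 this)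

theorem adjoint_eig (T : H →L[ℂ] H) (p : ℝ) (hp0 : 0 < p) (hp1 : p ≤ 1) (k : ℕ)
    (hT : PKQuasihyponormal T p k) (z : ℂ) (hz : z ≠ 0) (x : H) (hx : T x = z • x) :
    adjoint T x = conj z • x := by
  have hk : (T ^ k) x = z ^ k • x := by
    induction k with
    | zero => simp
    | succ n ih => 
      clear hT
      have : ∀ n : ℕ, (T ^ n) x = z ^ n • x := by
        intro n
        induction n with
        | zero => simp
        | succ n ih => rw [pow_succ', clm_mul_app, ih, map_smul, hx, smul_smul, pow_succ]
      exact this _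
  have hpos := ((ContinuousLinearMap.nonneg_iff_isPositive _).1 hT).re_inner_nonneg_right x
  have hadj : (adjoint T) ^ k = adjoint (T ^ k) := (star_pow T k).symm
  rw [hadj, clm_mul_app, clm_mul_app, adjoint_inner_right, hk, map_smul, inner_smul_left,
    inner_smul_right, ← mul_assoc, Complex.conj_mul'] at hpos
  have h1 : (inner ℂ x (opRpow (T * adjoint T) p x)).re
      ≤ (inner ℂ x (opRpow (adjoint T * T) p x)).re := by
    have e3 : (((‖z ^ k‖ : ℝ) : ℂ) ^ 2) = ((‖z ^ k‖ ^ 2 : ℝ) : ℂ) := by push_cast; rfl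
    rw [e3, RCLike.re_to_complex, Complex.re_ofReal_mul] at hpos
    have hzk : 0 < ‖z ^ k‖ ^ 2 := by have := norm_pos_iff.2 (pow_ne_zero k hz); positivity
    have := nonneg_of_mul_nonneg_right hpos hzk
    rw [sub_apply, inner_sub_right, Complex.sub_re] at this
    linarith
  have hc : Continuous fun s : ℝ => s ^ p := Real.continuous_rpow_const hp0.le
  have hint := congrArg (fun S : H →L[ℂ] H => inner ℂ (T x) (S x)) (cfc_intertwine T _ hc)
  simp only [clm_mul_app] at hint
  rw [← adjoint_inner_left T _ (T x)] at hint
  change inner ℂ (T x) (opRpow (T * adjoint T) p (T x))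
    = inner ℂ ((adjoint T * T) x) (opRpow (adjoint T * T) p x) at hint
  rw [hx, map_smul, inner_smul_left, inner_smul_right, ← mul_assoc, Complex.conj_mul'] at hint
  have e4 : (((‖z‖ : ℝ) : ℂ) ^ 2) = ((‖z‖ ^ 2 : ℝ) : ℂ) := by push_cast; rfl
  have hA : 0 ≤ adjoint T * T := star_mul_self_nonneg T
  have heig := eig_of_form (adjoint T * T) hA p hp0 hp1 (‖z‖ ^ 2) (by positivity) x ?_ ?_
  · rw [clm_mul_app, hx, map_smul, ← e4, ← Complex.mul_conj', mul_smul] at heig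
    exact smul_right_injective H hz heig
  · rw [inner_sub_right, clm_mul_app, adjoint_inner_right, hx, inner_smul_left, inner_smul_right,
      inner_smul_right, ← mul_assoc, Complex.conj_mul', e4, sub_self]
  · rw [← inner_conj_symm, Complex.conj_re, inner_sub_left, ← hint, inner_smul_left,
      Complex.conj_ofReal, e4, Complex.sub_re, Complex.re_ofReal_mul, Complex.re_ofReal_mul]
    have : 0 ≤ ‖z‖ ^ 2 := by positivity
    nlinarith [mul_le_mul_of_nonneg_left h1 this]

end

theorem pkQuasihyponormal_hasSVEP {H : Type*} [NormedAddCommGroup H]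
    [InnerProductSpace ℂ H] [CompleteSpace H] [TopologicalSpace.SeparableSpace H]
    (hinf : ¬ FiniteDimensional ℂ H)
    (T : H →L[ℂ] H) (p : ℝ) (hp0 : 0 < p) (hp1 : p ≤ 1) (k : ℕ) (hk : 0 < k)
    (hT : PKQuasihyponormal T p k) : HasSVEP T := by
  intro D hD _ f hf hTf
  have hlim : ∀ z ∈ D, ∀ g : H → ℂ, Continuous g → (∀ w ∈ D, w ≠ z → g (f w) = 0) →
      g (f z) = 0 := by
    intro z hz g hg h
    have hcont : ContinuousAt (fun w => g (f w)) z :=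
      hg.continuousAt.comp (hf z hz).continuousAt
    have h1 : Tendsto (fun w => g (f w)) (nhdsWithin z {z}ᶜ) (nhds (g (f z))) :=
      hcont.tendsto.mono_left nhdsWithin_le_nhds
    have h2 : Tendsto (fun w => g (f w)) (nhdsWithin z {z}ᶜ) (nhds 0) := by
      refine tendsto_const_nhds.congr' ?_
      filter_upwards [self_mem_nhdsWithin, mem_nhdsWithin_of_mem_nhds (hD.mem_nhds hz)] with w h3 h4
      exact (h w h4 h3).symm
    exact tendsto_nhds_unique h1 h2
  have hne : ∀ z ∈ D, z ≠ 0 → f z = 0 := by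
    intro z hz hz0
    have hadj := adjoint_eig T p hp0 hp1 k hT z hz0 (f z) (sub_eq_zero.1 (hTf z hz))
    have := hlim z hz (fun v => inner ℂ (f z) v) (by fun_prop) ?_
    · exact inner_self_eq_zero.1 this
    · intro w hw hwz
      have h1 := adjoint_inner_left T (f w) (f z)
      rw [hadj, sub_eq_zero.1 (hTf w hw), inner_smul_left, inner_smul_right, Complex.conj_conj] at h1
      have h2 : (w - z) * inner ℂ (f z) (f w) = 0 := by rw [sub_mul, h1, sub_self]
      exact (mul_eq_zero.1 h2).resolve_left (sub_ne_zero.2 hwz)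
  intro z hz
  by_cases hz0 : z = 0
  · have := hlim z hz (fun v => inner ℂ (f z) v) (by fun_prop) ?_
    · exact inner_self_eq_zero.1 this
    · intro w hw hwz
      simp [hne w hw (by rwa [hz0] at hwz)]
  · exact hne z hz hz0
end

section
/- Let A ∈ B(H) be a (p,k)-quasihyponormal operator on a complex Hilbert space H, and let M be a closed subspace of H invariant under A. Then the restriction of A to M, regarded as a bounded operator on the Hilbert space M, is (p,k)-quasihyponormal. -/
open ContinuousLinearMap Filter

set_option synthInstance.maxHeartbeats 400000

theorem aux_intertwine_s3 {K H : Type*} [NormedAddCommGroup H] [InnerProductSpace ℂ H]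
    [CompleteSpace H] [NormedAddCommGroup K] [InnerProductSpace ℂ K] [CompleteSpace K]
    (W : K →L[ℂ] H) (Y : H →L[ℂ] H) (Z : K →L[ℂ] K) (hY : IsSelfAdjoint Y)
    (hZ : IsSelfAdjoint Z) (h : Y ∘L W = W ∘L Z) (f : ℝ → ℝ) (hf : Continuous f) :
    cfc f Y ∘L W = W ∘L cfc f Z := by
  have hpoly : ∀ q : Polynomial ℝ,
      (Polynomial.aeval Y q) ∘L W = W ∘L (Polynomial.aeval Z q) := by
    intro q
    induction q using Polynomial.induction_on' with
    | add a b ha hb => simp only [map_add, add_comp, comp_add, ha, hb]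
    | monomial n r =>
      have hn : (Y ^ n) ∘L W = W ∘L (Z ^ n) := by
        induction n with
        | zero => ext x; simp
        | succ n ih =>
          rw [pow_succ, pow_succ', mul_def, mul_def, comp_assoc, h, ← comp_assoc, ih, comp_assoc,
            ← mul_def, ← mul_def, ← pow_succ, ← pow_succ']
      simp only [Polynomial.aeval_monomial, Algebra.algebraMap_eq_smul_one, smul_mul_assoc,
        one_mul]
      ext x
      have := congrArg (fun T => T x) hn
      simp only [comp_apply] at this
      simp only [comp_apply, smul_apply, this]
      rw [← Complex.coe_smul, ← Complex.coe_smul, map_smul]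
  set R : ℝ := max ‖Y‖ ‖Z‖ * max ‖(1 : H →L[ℂ] H)‖ ‖(1 : K →L[ℂ] K)‖ with hR
  have key : ∀ ε > 0, ‖cfc f Y ∘L W - W ∘L cfc f Z‖ ≤ ε * (2 * ‖W‖) := by
    intro ε hε
    obtain ⟨q, hq⟩ := exists_polynomial_near_of_continuousOn (-R) R f hf.continuousOn ε hε
    have b1 : ‖cfc f Y - Polynomial.aeval Y q‖ ≤ ε := by
      rw [← cfc_polynomial q Y hY, ← cfc_sub f q.eval Y hf.continuousOn
        q.continuous.continuousOn]
      refine norm_cfc_le hε.le fun x hx => ?_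
      have hx' : ‖x‖ ≤ R := (spectrum.norm_le_norm_mul_of_mem hx).trans
        (mul_le_mul (le_max_left _ _) (le_max_left _ _) (norm_nonneg _)
          ((norm_nonneg _).trans (le_max_left _ _)))
      rw [Real.norm_eq_abs, abs_le] at hx'
      rw [Real.norm_eq_abs, abs_sub_comm]
      exact (hq x hx').le
    have b2 : ‖cfc f Z - Polynomial.aeval Z q‖ ≤ ε := by
      rw [← cfc_polynomial q Z hZ, ← cfc_sub f q.eval Z hf.continuousOn
        q.continuous.continuousOn]
      refine norm_cfc_le hε.le fun x hx => ?_
      have hx' : ‖x‖ ≤ R := (spectrum.norm_le_norm_mul_of_mem hx).trans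
        (mul_le_mul (le_max_right _ _) (le_max_right _ _) (norm_nonneg _)
          ((norm_nonneg _).trans (le_max_left _ _)))
      rw [Real.norm_eq_abs, abs_le] at hx'
      rw [Real.norm_eq_abs, abs_sub_comm]
      exact (hq x hx').le
    have e : cfc f Y ∘L W - W ∘L cfc f Z =
        (cfc f Y - Polynomial.aeval Y q) ∘L W - W ∘L (cfc f Z - Polynomial.aeval Z q) := by
      rw [sub_comp, comp_sub, hpoly q]; abel
    rw [e]
    calc _ ≤ ‖(cfc f Y - Polynomial.aeval Y q) ∘L W‖
          + ‖W ∘L (cfc f Z - Polynomial.aeval Z q)‖ := norm_sub_le _ _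
      _ ≤ ε * ‖W‖ + ‖W‖ * ε := by
        refine add_le_add ((opNorm_comp_le _ _).trans ?_) ((opNorm_comp_le _ _).trans ?_)
        · gcongr
        · gcongr
      _ = _ := by ring
  have h0 : ‖cfc f Y ∘L W - W ∘L cfc f Z‖ ≤ 0 := by
    have ht : Tendsto (fun ε : ℝ => ε * (2 * ‖W‖)) (nhdsWithin 0 (Set.Ioi 0)) (nhds 0) := by
      have : Continuous (fun ε : ℝ => ε * (2 * ‖W‖)) := by fun_prop
      simpa using (this.tendsto 0).mono_left nhdsWithin_le_nhds
    exact ge_of_tendsto ht (by filter_upwards [self_mem_nhdsWithin] with ε hε using key ε hε)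
  exact sub_eq_zero.mp (norm_le_zero_iff.mp h0)

theorem aux_conj_nonneg {K H : Type*} [NormedAddCommGroup H] [InnerProductSpace ℂ H]
    [CompleteSpace H] [NormedAddCommGroup K] [InnerProductSpace ℂ K] [CompleteSpace K]
    (V : K →L[ℂ] H) {X : H →L[ℂ] H} (hX : 0 ≤ X) : 0 ≤ adjoint V ∘L X ∘L V :=
  (nonneg_iff_isPositive _).2 (((nonneg_iff_isPositive _).1 hX).adjoint_conj V)

theorem aux_hansen {K H : Type*} [NormedAddCommGroup H] [InnerProductSpace ℂ H]
    [CompleteSpace H] [NormedAddCommGroup K] [InnerProductSpace ℂ K] [CompleteSpace K]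
    (V : K →L[ℂ] H) (hV : adjoint V ∘L V = .id ℂ K) (X : H →L[ℂ] H) (hX : 0 ≤ X)
    (p : ℝ) (hp0 : 0 < p) (hp1 : p ≤ 1) :
    0 ≤ opRpow (adjoint V ∘L X ∘L V) p - adjoint V ∘L opRpow X p ∘L V := by
  have hVx : ∀ x, adjoint V (V x) = x := fun x => congrArg (fun T => T x) hV
  have hf : Continuous (fun x : ℝ => x ^ p) := Real.continuous_rpow_const hp0.le
  set U : H →L[ℂ] H := V ∘L adjoint V + V ∘L adjoint V - 1 with hU
  have hUadj : adjoint U = U := by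
    rw [hU, map_sub, ← star_eq_adjoint 1, star_one, map_add, adjoint_comp, adjoint_adjoint]
  have hUU : ∀ x, U (U x) = x := by
    intro x
    simp [hU, hVx]
  have hUV : ∀ x, U (V x) = V x := by
    intro x
    simp [hU, hVx]
  have hVU : ∀ x, adjoint V (U x) = adjoint V x := by
    intro x
    simp [hU, hVx]
  set X' : H →L[ℂ] H := U ∘L X ∘L U with hX'
  have hX'0 : 0 ≤ X' := by
    have := aux_conj_nonneg U hX
    rwa [hUadj] at this
  have hXp' : ∀ x, opRpow X' p (U x) = U (opRpow X p x) := by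
    have := aux_intertwine_s3 U X' X (IsSelfAdjoint.of_nonneg hX'0) (IsSelfAdjoint.of_nonneg hX)
      (by ext x; simp [hX', hUU]) _ hf
    exact fun x => congrArg (fun T => T x) this
  have hconc := And.right (CFC.concaveOn_rpow (A := H →L[ℂ] H) (p := p) ⟨hp0.le, hp1⟩)
  replace hconc := @hconc X hX X' hX'0 (1/2) (1/2) (by norm_num) (by norm_num) (by norm_num)
  set Y : H →L[ℂ] H := (1/2 : ℝ) • X + (1/2 : ℝ) • X' with hY
  have hY0 : 0 ≤ Y := by
    refine add_nonneg (smul_nonneg (by norm_num) hX) (smul_nonneg (by norm_num) hX'0)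
  simp only at hconc
  rw [CFC.rpow_eq_cfc_real hX, CFC.rpow_eq_cfc_real hX'0, CFC.rpow_eq_cfc_real hY0] at hconc
  change (1/2 : ℝ) • opRpow X p + (1/2 : ℝ) • opRpow X' p ≤ opRpow Y p at hconc
  have hZ0 := aux_conj_nonneg V hX
  have hYp : ∀ x, opRpow Y p (V x) = V (opRpow (adjoint V ∘L X ∘L V) p x) := by
    have := aux_intertwine_s3 V Y (adjoint V ∘L X ∘L V) (IsSelfAdjoint.of_nonneg hY0)
      (IsSelfAdjoint.of_nonneg hZ0) (by
        ext x
        simp only [hY, hX', comp_apply, add_apply, smul_apply, hUV]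
        simp only [hU, sub_apply, add_apply, comp_apply, one_apply_eq_self]
        module) _ hf
    exact fun x => congrArg (fun T => T x) this
  have := aux_conj_nonneg V (sub_nonneg.2 hconc)
  convert this using 1
  ext x
  have e : opRpow X' p (V x) = U (opRpow X p (V x)) := by rw [← hXp', hUV]
  simp only [comp_apply, add_apply, smul_apply, sub_apply, hYp, e, map_sub, hVx, map_add]
  rw [← Complex.coe_smul, ← Complex.coe_smul, map_smul, map_smul, hVU]
  module

theorem aux_main_s3 {K H : Type*} [NormedAddCommGroup H] [InnerProductSpace ℂ H]
    [CompleteSpace H] [NormedAddCommGroup K] [InnerProductSpace ℂ K] [CompleteSpace K]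
    (V : K →L[ℂ] H) (hV : adjoint V ∘L V = .id ℂ K) (A : H →L[ℂ] H) (B : K →L[ℂ] K)
    (hAB : A ∘L V = V ∘L B)
    (p : ℝ) (hp0 : 0 < p) (hp1 : p ≤ 1) (k : ℕ)
    (hA : PKQuasihyponormal A p k) : PKQuasihyponormal B p k := by
  have hVx : ∀ x, adjoint V (V x) = x := fun x => congrArg (fun T => T x) hV
  have hABx : ∀ x, A (V x) = V (B x) := fun x => congrArg (fun T => T x) hAB
  have hABs : ∀ x, adjoint V (adjoint A x) = adjoint B (adjoint V x) := by
    have := congrArg adjoint hAB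
    rw [adjoint_comp, adjoint_comp] at this
    exact fun x => congrArg (fun T => T x) this
  have hf : Continuous (fun x : ℝ => x ^ p) := Real.continuous_rpow_const hp0.le
  have hAA : 0 ≤ adjoint A * A := star_mul_self_nonneg A
  have hAA' : 0 ≤ A * adjoint A := mul_star_self_nonneg A
  have hBB' : 0 ≤ B * adjoint B := mul_star_self_nonneg B
  have h1 := aux_hansen V hV (adjoint A * A) hAA p hp0 hp1
  have hB1 : adjoint V ∘L (adjoint A * A) ∘L V = adjoint B * B := by
    ext x
    simp [hABx, hABs, hVx]
  rw [hB1] at h1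
  -- second part
  set Y : H →L[ℂ] H := V ∘L (B * adjoint B) ∘L adjoint V with hY
  have hY0 : 0 ≤ Y := by
    have := aux_conj_nonneg (adjoint V) hBB'
    rwa [adjoint_adjoint] at this
  have hP : 0 ≤ (1 : H →L[ℂ] H) - V ∘L adjoint V := by
    have hs : star ((1 : H →L[ℂ] H) - V ∘L adjoint V) = 1 - V ∘L adjoint V := by
      rw [star_sub, star_one, star_eq_adjoint, adjoint_comp, adjoint_adjoint]
    have : (1 : H →L[ℂ] H) - V ∘L adjoint V =
        star ((1 : H →L[ℂ] H) - V ∘L adjoint V) * (1 - V ∘L adjoint V) := by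
      rw [hs]
      ext x
      simp [hVx]
    rw [this]
    exact star_mul_self_nonneg _
  have hYA : Y ≤ A * adjoint A := by
    rw [← sub_nonneg]
    have := aux_conj_nonneg (adjoint A) hP
    convert this using 1
    ext x
    simp [hY, hABx, hABs]
  have hmono := CFC.rpow_le_rpow (p := p) ⟨hp0.le, hp1⟩ hYA
  rw [CFC.rpow_eq_cfc_real hY0, CFC.rpow_eq_cfc_real hAA'] at hmono
  change opRpow Y p ≤ opRpow (A * adjoint A) p at hmono
  have hYp : ∀ x, opRpow Y p (V x) = V (opRpow (B * adjoint B) p x) := by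
    have := aux_intertwine_s3 V Y (B * adjoint B) (IsSelfAdjoint.of_nonneg hY0)
      (IsSelfAdjoint.of_nonneg hBB') (by ext x; simp [hY, hVx]) _ hf
    exact fun x => congrArg (fun T => T x) this
  have h2 := aux_conj_nonneg V (sub_nonneg.2 hmono)
  have h3 := aux_conj_nonneg (B ^ k) (add_nonneg h1 h2)
  have h4 := aux_conj_nonneg V hA
  have h5 := add_nonneg h3 h4
  unfold PKQuasihyponormal
  convert h5 using 1
  have hk1 : ∀ x, (A ^ k) (V x) = V ((B ^ k) x) := by
    clear * - hABx
    induction k with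
    | zero => simp
    | succ n ih => intro x; rw [pow_succ, pow_succ, mul_def, mul_def, comp_apply, comp_apply, hABx, ih]
  have hk2 : ∀ x, adjoint V ((adjoint A ^ k) x) = (adjoint B ^ k) (adjoint V x) := by
    clear * - hABs
    induction k with
    | zero => simp
    | succ n ih => intro x; rw [pow_succ, pow_succ, mul_def, mul_def, comp_apply, comp_apply, ih, hABs]
  have hk3 : adjoint (B ^ k) = adjoint B ^ k := by
    rw [← star_eq_adjoint, ← star_eq_adjoint, star_pow]
  ext x
  simp only [hk3, mul_def, comp_apply, add_apply, sub_apply, hYp, hk1, hk2, map_sub, hVx,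
    map_add]
  abel

theorem pkQuasihyponormal_restrict {H : Type*} [NormedAddCommGroup H]
    [InnerProductSpace ℂ H] [CompleteSpace H]
    (A : H →L[ℂ] H) (p : ℝ) (hp0 : 0 < p) (hp1 : p ≤ 1) (k : ℕ) (hk : 0 < k)
    (hA : PKQuasihyponormal A p k)
    (M : Submodule ℂ H) (hMc : IsClosed (M : Set H)) (hInv : ∀ x ∈ M, A x ∈ M) :
    haveI : CompleteSpace M := hMc.completeSpace_coe
    PKQuasihyponormal (restrictOp A M hInv) p k := by
  haveI : CompleteSpace M := hMc.completeSpace_coe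
  refine aux_main_s3 M.subtypeL ?_ A (restrictOp A M hInv) ?_ p hp0 hp1 k hA
  · ext x
    refine congrArg Subtype.val (ext_inner_right ℂ fun y => ?_)
    rw [comp_apply, adjoint_inner_left]
    rfl
  · ext x
    rfl
end

section
/- Every log-hyponormal operator A ∈ B(H) on a complex Hilbert space H is a class A operator. -/
open ContinuousLinearMap Filter

set_option synthInstance.maxHeartbeats 400000

section Aux

variable {𝒜 : Type*} [CStarAlgebra 𝒜] [PartialOrder 𝒜] [StarOrderedRing 𝒜]

lemma aux_mono {a g g' : 𝒜} (ha : IsStrictlyPositive a) (hg : 0 ≤ g) (hg' : 0 ≤ g')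
    (h : g * a * g ≤ g' * a * g') : g ≤ g' := by
  set s := CFC.sqrt a with hs
  have hs0 : 0 ≤ s := CFC.sqrt_nonneg a
  have hsa : IsSelfAdjoint s := .of_nonneg hs0
  have hss : s * s = a := CFC.sqrt_mul_sqrt_self a ha.nonneg
  have hsu : IsUnit s := IsStrictlyPositive.isUnit_cfcSqrt a ha
  have e : ∀ x : 𝒜, s * (x * a * x) * s = (s * x * s) * (s * x * s) := by
    intro x; rw [← hss]; noncomm_ring
  have h1 := conjugate_le_conjugate_of_nonneg h hs0
  rw [e, e] at h1
  have h2 := CFC.sqrt_le_sqrt _ _ h1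
  rw [CFC.sqrt_mul_self _ (conjugate_nonneg_of_nonneg hg hs0),
    CFC.sqrt_mul_self _ (conjugate_nonneg_of_nonneg hg' hs0)] at h2
  rw [← sub_nonneg] at h2 ⊢
  rw [← hsu.star_right_conjugate_nonneg_iff, hsa.star_eq]
  convert h2 using 1
  noncomm_ring

lemma aux_exists {a b : 𝒜} (ha : IsStrictlyPositive a) (hb : IsStrictlyPositive b) :
    ∃ g : 𝒜, 0 ≤ g ∧ g * a * g = b := by
  set s := CFC.sqrt a with hs
  have hs0 : 0 ≤ s := CFC.sqrt_nonneg a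
  have hss : s * s = a := CFC.sqrt_mul_sqrt_self a ha.nonneg
  have hsp : IsStrictlyPositive s := IsStrictlyPositive.sqrt a ha
  have htp := hsp.ringInverse
  have h1 := Ring.mul_inverse_cancel s hsp.isUnit
  have h2 := Ring.inverse_mul_cancel s hsp.isUnit
  set t := Ring.inverse s
  have hq := CFC.sqrt_mul_sqrt_self (s * b * s) (conjugate_nonneg_of_nonneg hb.nonneg hs0)
  have hq0 := CFC.sqrt_nonneg (s * b * s)
  set q := CFC.sqrt (s * b * s)
  refine ⟨t * q * t, conjugate_nonneg_of_nonneg hq0 htp.nonneg, ?_⟩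
  calc t * q * t * a * (t * q * t) = t * q * (t * s) * (s * t) * q * t := by
        rw [← hss]; noncomm_ring
    _ = t * (q * q) * t := by rw [h1, h2]; noncomm_ring
    _ = (t * s) * b * (s * t) := by rw [hq]; noncomm_ring
    _ = b := by rw [h1, h2]; noncomm_ring

lemma aux_unit {a b g : 𝒜} (hb : IsUnit b) (h : g * a * g = b) : IsUnit g := by
  have h1 := Ring.mul_inverse_cancel b hb
  have h2 := Ring.inverse_mul_cancel b hb
  refine isUnit_iff_exists_and_exists.2 ⟨⟨a * g * Ring.inverse b, ?_⟩, ⟨Ring.inverse b * g * a, ?_⟩⟩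
  · rw [← h1]; nth_rw 2 [← h]; noncomm_ring
  · rw [← h2]; nth_rw 3 [← h]; noncomm_ring

lemma aux_inv {a b g : 𝒜} (ha : IsUnit a) (hb : IsUnit b) (h : g * a * g = b) :
    g * Ring.inverse b * g = Ring.inverse a := by
  have hg := aux_unit hb h
  subst h
  lift g to 𝒜ˣ using hg
  lift a to 𝒜ˣ using ha
  rw [← Units.val_mul, ← Units.val_mul, Ring.inverse_unit, Ring.inverse_unit,
    ← Units.val_mul, ← Units.val_mul]
  congr 1
  group

lemma aux_mono2 {a a' b b' g g' : 𝒜} (ha : IsStrictlyPositive a) (ha' : IsStrictlyPositive a')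
    (hb : IsStrictlyPositive b) (hb' : IsStrictlyPositive b')
    (haa : a' ≤ a) (hbb : b ≤ b') (hg : 0 ≤ g) (hg' : 0 ≤ g')
    (h : g * a * g = b) (h' : g' * a' * g' = b') : g ≤ g' := by
  obtain ⟨k, hk0, hk⟩ := aux_exists ha hb'
  have h1 : g ≤ k := aux_mono ha hg hk0 (by rw [h, hk]; exact hbb)
  refine h1.trans (aux_mono hb'.ringInverse hk0 hg' ?_)
  rw [aux_inv ha.isUnit hb'.isUnit hk, aux_inv ha'.isUnit hb'.isUnit h']
  exact CStarAlgebra.ringInverse_le_ringInverse haa ha'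

lemma aux_base {x y : 𝒜} (hx : IsStrictlyPositive x) (hy : IsStrictlyPositive y) (h : y ≤ x) :
    ∃ g : 𝒜, 1 ≤ g ∧ g * y * g = x := by
  obtain ⟨g, hg0, hg⟩ := aux_exists hy hx
  exact ⟨g, aux_mono hy zero_le_one hg0 (by rw [hg]; simpa using h), hg⟩

lemma aux_sq_pos {x : 𝒜} (hx : IsStrictlyPositive x) : IsStrictlyPositive (x * x) := by
  have := IsStrictlyPositive.conjugate_of_isUnit_of_isSelfAdjoint (1 : 𝒜) x hx.isUnit
    hx.isSelfAdjoint isStrictlyPositive_one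
  simpa using this

lemma aux_step {x y g : 𝒜} (hx : IsStrictlyPositive x) (hy : IsStrictlyPositive y)
    (hg : 1 ≤ g) (h : g * y * g = x) :
    ∃ g' : 𝒜, 1 ≤ g' ∧ g' * (y * y) * g' = x * x := by
  have hg0 : 0 ≤ g := zero_le_one.trans hg
  have hgp : IsStrictlyPositive g := isStrictlyPositive_one.of_le hg
  obtain ⟨k, hk0, hk⟩ := aux_exists (aux_sq_pos hy) (aux_sq_pos hx)
  refine ⟨k, hg.trans ?_, hk⟩
  have hA : IsStrictlyPositive (y * g * y) :=
    .conjugate_of_isUnit_of_isSelfAdjoint g y hy.isUnit hy.isSelfAdjoint hgp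
  have hB : IsStrictlyPositive (g * (y * g * y) * g) :=
    .conjugate_of_isUnit_of_isSelfAdjoint _ g hgp.isUnit hgp.isSelfAdjoint hA
  refine aux_mono2 hA (aux_sq_pos hy) hB (aux_sq_pos hx) ?_ ?_ hg0 hk0 rfl hk
  · simpa using conjugate_le_conjugate_of_nonneg hg hy.nonneg
  · have hgg : g ≤ g * g := by
      have h1 : 0 ≤ g - 1 := sub_nonneg.2 hg
      have h2 := add_nonneg (conjugate_nonneg_of_nonneg zero_le_one h1) h1
      rw [← sub_nonneg]
      convert h2 using 1
      noncomm_ring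
    have := conjugate_le_conjugate_of_nonneg (conjugate_le_conjugate_of_nonneg hgg hy.nonneg) hg0
    refine this.trans_eq ?_
    rw [← h]; noncomm_ring

lemma aux_pow_pos {x : 𝒜} (hx : IsStrictlyPositive x) (k : ℕ) :
    IsStrictlyPositive (x ^ (2 ^ k)) := by
  induction k with
  | zero => simpa using hx
  | succ k ih => rw [pow_succ, pow_mul, sq]; exact aux_sq_pos ih

lemma aux_iter {x y : 𝒜} (hx : IsStrictlyPositive x) (hy : IsStrictlyPositive y) (h : y ≤ x)
    (k : ℕ) : ∃ g : 𝒜, 1 ≤ g ∧ g * y ^ (2 ^ k) * g = x ^ (2 ^ k) := by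
  induction k with
  | zero => simpa using aux_base hx hy h
  | succ k ih =>
    obtain ⟨g, hg, e⟩ := ih
    rw [pow_succ, pow_mul, pow_mul, sq, sq]
    exact aux_step (aux_pow_pos hx k) (aux_pow_pos hy k) hg e

lemma aux_cfc_s7 {a : 𝒜} (ha : IsStrictlyPositive a) (p : ℝ) :
    cfc (fun x : ℝ => p⁻¹ * (x ^ p - 1)) a = p⁻¹ • (a ^ p - (1 : 𝒜)) := by
  simp only [← smul_eq_mul]
  rw [cfc_smul _ (hf := by fun_prop (disch := grind)),
    cfc_sub _ _ (hf := by fun_prop (disch := grind)),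
    cfc_const_one .., CFC.rpow_eq_cfc_real ..]

lemma aux_root {x y : 𝒜} (hx : IsStrictlyPositive x) (hy : IsStrictlyPositive y) {ε : ℝ}
    (hε : 0 < ε) (h : algebraMap ℝ 𝒜 ε + CFC.log y ≤ CFC.log x) :
    ∃ k : ℕ, y ^ (((2 ^ k : ℕ) : ℝ)⁻¹) ≤ x ^ (((2 ^ k : ℕ) : ℝ)⁻¹) := by
  have ht : Tendsto (fun k : ℕ => ((2 ^ k : ℕ) : ℝ)⁻¹) atTop (nhdsWithin 0 (Set.Ioi 0)) := by
    refine tendsto_nhdsWithin_iff.2 ⟨?_, .of_forall fun k => by simp⟩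
    have := tendsto_pow_atTop_nhds_zero_of_lt_one (r := (2 : ℝ)⁻¹) (by norm_num) (by norm_num)
    simpa using this
  have h1 := ((CFC.tendsto_cfc_rpow_sub_one_log hx).sub
    (CFC.tendsto_cfc_rpow_sub_one_log hy)).comp ht
  obtain ⟨k, hk⟩ := (Metric.tendsto_nhds.1 h1 ε hε).exists
  refine ⟨k, ?_⟩
  simp only [Function.comp] at hk
  have hp : 0 < ((2 ^ k : ℕ) : ℝ)⁻¹ := by positivity
  set p := ((2 ^ k : ℕ) : ℝ)⁻¹
  rw [dist_eq_norm] at hk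
  have hsa : IsSelfAdjoint (cfc (fun x : ℝ => p⁻¹ * (x ^ p - 1)) x
      - cfc (fun x : ℝ => p⁻¹ * (x ^ p - 1)) y - (CFC.log x - CFC.log y)) :=
    (IsSelfAdjoint.sub (cfc_predicate _ x) (cfc_predicate _ y)).sub (IsSelfAdjoint.log.sub IsSelfAdjoint.log)
  have h2 := hsa.neg_algebraMap_norm_le_self
  have h3 : algebraMap ℝ 𝒜 ‖cfc (fun x : ℝ => p⁻¹ * (x ^ p - 1)) x
      - cfc (fun x : ℝ => p⁻¹ * (x ^ p - 1)) y - (CFC.log x - CFC.log y)‖ ≤ algebraMap ℝ 𝒜 ε :=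
    algebraMap_mono 𝒜 hk.le
  rw [aux_cfc_s7 hx, aux_cfc_s7 hy] at h2 h3
  have h4 : 0 ≤ p⁻¹ • (x ^ p - (1 : 𝒜)) - p⁻¹ • (y ^ p - (1 : 𝒜)) := by
    rw [← sub_nonneg] at h h2 h3
    have := add_nonneg (add_nonneg h h2) h3
    convert this using 1
    abel
  rw [← smul_sub] at h4
  have h5 := smul_nonneg hp.le h4
  rw [smul_smul, mul_inv_cancel₀ hp.ne', one_smul] at h5
  rw [← sub_nonneg]
  convert h5 using 1
  abel

lemma aux_root_pow {x : 𝒜} (hx : IsStrictlyPositive x) (k : ℕ) :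
    (x ^ (((2 ^ k : ℕ) : ℝ)⁻¹)) ^ (2 ^ k) = x := by
  rw [← CFC.rpow_natCast _ _ CFC.rpow_nonneg]
  exact CFC.rpow_inv_rpow x _ (by positivity) hx

lemma aux_chaotic {x y : 𝒜} (hx : IsStrictlyPositive x) (hy : IsStrictlyPositive y) {ε : ℝ}
    (hε : 0 < ε) (h : CFC.log y ≤ CFC.log x) :
    ∃ g : 𝒜, 1 ≤ g ∧ g * y * g = Real.exp ε • x := by
  have hx' : IsStrictlyPositive (Real.exp ε • x) := hx.smul (Real.exp_pos ε)
  obtain ⟨k, hk⟩ := aux_root hx' hy hε (by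
    rw [CFC.log_smul' x (Real.exp_pos ε) hx, Real.log_exp]
    gcongr)
  have := aux_iter (IsStrictlyPositive.rpow _ _ hx') (IsStrictlyPositive.rpow _ _ hy) hk k
  rwa [aux_root_pow hx', aux_root_pow hy] at this

lemma aux_main_s7 {a : 𝒜} (ha : IsUnit a) (h : CFC.log (a * star a) ≤ CFC.log (star a * a)) :
    star a * a ≤ CFC.sqrt (star (a ^ 2) * a ^ 2) := by
  have hx : IsStrictlyPositive (star a * a) :=
    (ha.star.mul ha).isStrictlyPositive (star_mul_self_nonneg a)
  have hy : IsStrictlyPositive (a * star a) :=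
    (ha.mul ha.star).isStrictlyPositive (mul_star_self_nonneg a)
  have hR := CFC.sqrt_mul_sqrt_self (star (a ^ 2) * a ^ 2) (star_mul_self_nonneg _)
  have hR0 := CFC.sqrt_nonneg (star (a ^ 2) * a ^ 2)
  set R := CFC.sqrt (star (a ^ 2) * a ^ 2)
  have key : ∀ ε : ℝ, 0 < ε → star a * a ≤ Real.exp ε • R := by
    intro ε hε
    obtain ⟨g, hg, e⟩ := aux_chaotic hx hy (ε := ε + ε) (by positivity) h
    have h1 := star_left_conjugate_le_conjugate hg a
    have h0 : 0 ≤ star a * g * a := star_left_conjugate_nonneg (zero_le_one.trans hg) a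
    rw [mul_one] at h1
    refine h1.trans_eq ?_
    refine (CFC.mul_self_eq_mul_self_iff _ _ h0 (smul_nonneg (Real.exp_pos ε).le hR0)).1 ?_
    rw [smul_mul_smul_comm, ← Real.exp_add, hR]
    calc star a * g * a * (star a * g * a) = star a * (g * (a * star a) * g) * a := by
          noncomm_ring
      _ = _ := by
          rw [e, mul_smul_comm, smul_mul_assoc, star_pow]
          congr 1
          noncomm_ring
  have ht : Tendsto (fun ε : ℝ => Real.exp ε • R) (nhdsWithin 0 (Set.Ioi 0)) (nhds R) := by
    have : Continuous (fun ε : ℝ => Real.exp ε • R) := by fun_prop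
    have := (this.tendsto 0).mono_left (nhdsWithin_le_nhds (s := Set.Ioi 0))
    simpa using this
  exact ge_of_tendsto ht (eventually_nhdsWithin_of_forall fun ε hε => key ε hε)

end Aux

theorem logHyponormal_classA {H : Type*} [NormedAddCommGroup H]
    [InnerProductSpace ℂ H] [CompleteSpace H]
    (A : H →L[ℂ] H) (hA : LogHyponormal A) : ClassA A := by
  obtain ⟨hu, hl⟩ := hA
  have e : ∀ B : H →L[ℂ] H, opAbs B = CFC.sqrt (star B * B) := by
    intro B
    rw [CFC.sqrt_eq_real_sqrt _ (star_mul_self_nonneg B), cfcₙ_eq_cfc]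
    rfl
  have := aux_main_s7 hu hl
  unfold ClassA
  rw [e, e, CFC.sq_sqrt _ (star_mul_self_nonneg A)]
  exact this
end

section
/- Every class A operator A ∈ B(H) on a complex Hilbert space H is a paranormal operator. -/
open ContinuousLinearMap Filter

set_option synthInstance.maxHeartbeats 400000

theorem opAbs_sq_aux {H : Type*} [NormedAddCommGroup H] [InnerProductSpace ℂ H]
    [CompleteSpace H] (A : H →L[ℂ] H) : opAbs A ^ 2 = adjoint A * A := by
  have h0 : 0 ≤ adjoint A * A := star_mul_self_nonneg A
  have hs : IsSelfAdjoint (adjoint A * A) := IsSelfAdjoint.of_nonneg h0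
  unfold opAbs
  rw [← cfc_pow (fun x : ℝ => Real.sqrt x) 2 (adjoint A * A)
    (by fun_prop) hs]
  conv_rhs => rw [← cfc_id ℝ (adjoint A * A) hs]
  refine cfc_congr fun x hx => ?_
  have : 0 ≤ x := spectrum_nonneg_of_nonneg h0 hx
  simp [Real.sq_sqrt this]

theorem opAbs_sa_aux {H : Type*} [NormedAddCommGroup H] [InnerProductSpace ℂ H]
    [CompleteSpace H] (A : H →L[ℂ] H) : adjoint (opAbs A) = opAbs A := by
  have h : IsSelfAdjoint (opAbs A) := cfc_predicate _ _
  exact h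

theorem opAbs_inner_aux {H : Type*} [NormedAddCommGroup H] [InnerProductSpace ℂ H]
    [CompleteSpace H] (A : H →L[ℂ] H) (x : H) :
    inner ℂ ((opAbs A ^ 2) x) x = ((‖A x‖ ^ 2 : ℝ) : ℂ) := by
  rw [opAbs_sq_aux, ContinuousLinearMap.mul_apply, adjoint_inner_left,
    inner_self_eq_norm_sq_to_K]
  simp

theorem opAbs_norm_aux {H : Type*} [NormedAddCommGroup H] [InnerProductSpace ℂ H]
    [CompleteSpace H] (A : H →L[ℂ] H) (x : H) : ‖opAbs A x‖ = ‖A x‖ := by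
  have h := opAbs_inner_aux A x
  rw [pow_two, ContinuousLinearMap.mul_apply, ← adjoint_inner_right, opAbs_sa_aux,
    inner_self_eq_norm_sq_to_K] at h
  have h2 : ‖opAbs A x‖ ^ 2 = ‖A x‖ ^ 2 := by
    apply Complex.ofReal_injective
    rw [← h]
    simp
  exact (sq_eq_sq₀ (norm_nonneg _) (norm_nonneg _)).1 h2

theorem classA_paranormal {H : Type*} [NormedAddCommGroup H]
    [InnerProductSpace ℂ H] [CompleteSpace H]
    (A : H →L[ℂ] H) (hA : ClassA A) : Paranormal A := by
  intro x
  have hp := (ContinuousLinearMap.le_def _ _).1 hA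
  have h1 := hp.re_inner_nonneg_left x
  rw [ContinuousLinearMap.sub_apply, inner_sub_left, opAbs_inner_aux] at h1
  have h2 := re_inner_le_norm (𝕜 := ℂ) (opAbs (A ^ 2) x) x
  rw [opAbs_norm_aux] at h2
  have h3 : (A ^ 2) x = A (A x) := by rw [pow_two, ContinuousLinearMap.mul_apply]
  rw [h3] at h2
  rw [map_sub] at h1
  have h4 : RCLike.re (((‖A x‖ ^ 2 : ℝ) : ℂ)) = ‖A x‖ ^ 2 := Complex.ofReal_re _
  rw [h4] at h1
  linarith
end

section
/- Every paranormal operator A ∈ B(H) on a complex Hilbert space H is normaloid, i.e., its operator norm equals its spectral radius. -/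
open ContinuousLinearMap Filter

set_option synthInstance.maxHeartbeats 400000

theorem paranormal_pow_aux {H : Type*} [NormedAddCommGroup H]
    [InnerProductSpace ℂ H] (A : H →L[ℂ] H) (hA : Paranormal A) (n : ℕ) :
    ∀ x : H, ‖A x‖ ^ (n + 1) ≤ ‖(A ^ (n + 1)) x‖ * ‖x‖ ^ n := by
  induction n with
  | zero => intro x; simp
  | succ n ih =>
    intro x
    rcases (norm_nonneg (A x)).eq_or_lt with h0 | h0
    · rw [← h0, zero_pow (by omega)]; positivity
    have h1 := ih (A x)
    have h2 : (A ^ (n + 1)) (A x) = (A ^ (n + 1 + 1)) x := by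
      rw [pow_succ A (n + 1)]; rfl
    rw [h2] at h1
    have h3 := pow_le_pow_left₀ (by positivity) (hA x) (n + 1)
    rw [mul_pow] at h3
    have h4 := mul_le_mul_of_nonneg_right h1 (pow_nonneg (norm_nonneg x) (n + 1))
    have h5 : ‖A x‖ ^ n * ‖A x‖ ^ (n + 1 + 1) ≤
        ‖A x‖ ^ n * (‖(A ^ (n + 1 + 1)) x‖ * ‖x‖ ^ (n + 1)) := by
      calc _ = (‖A x‖ ^ 2) ^ (n + 1) := by ring
        _ ≤ _ := h3.trans h4
        _ = _ := by ring
    exact le_of_mul_le_mul_left h5 (pow_pos h0 n)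

theorem paranormal_norm_aux {H : Type*} [NormedAddCommGroup H]
    [InnerProductSpace ℂ H] (A : H →L[ℂ] H) (hA : Paranormal A) (n : ℕ) (hn : n ≠ 0) :
    ‖A‖ ≤ ‖A ^ n‖ ^ (1 / n : ℝ) := by
  refine ContinuousLinearMap.opNorm_le_bound _ (by positivity) fun x => ?_
  refine le_of_pow_le_pow_left₀ hn (by positivity) ?_
  rw [mul_pow, one_div, Real.rpow_inv_natCast_pow (norm_nonneg _) hn]
  obtain ⟨m, rfl⟩ := Nat.exists_eq_succ_of_ne_zero hn
  refine (paranormal_pow_aux A hA m x).trans ?_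
  calc _ ≤ (‖A ^ (m + 1)‖ * ‖x‖) * ‖x‖ ^ m := by
        gcongr; exact ContinuousLinearMap.le_opNorm _ _
    _ = _ := by rw [Nat.succ_eq_add_one]; ring

theorem paranormal_normaloid {H : Type*} [NormedAddCommGroup H]
    [InnerProductSpace ℂ H] [CompleteSpace H]
    (A : H →L[ℂ] H) (hA : Paranormal A) : Normaloid A := by
  unfold Normaloid
  apply le_antisymm
  · rcases subsingleton_or_nontrivial H with h | h
    · have : A = 0 := Subsingleton.elim _ _
      simp [this]
    · exact spectrum.spectralRadius_le_nnnorm A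
  · refine ge_of_tendsto (spectrum.pow_norm_pow_one_div_tendsto_nhds_spectralRadius A) ?_
    filter_upwards [eventually_ne_atTop 0] with n hn
    change ‖A‖ₑ ≤ _
    rw [← ofReal_norm A]
    exact ENNReal.ofReal_le_ofReal (paranormal_norm_aux A hA n hn)
end

section
/- Let A ∈ B(H) be an invertible p-hyponormal operator on a complex Hilbert space H for some 0 < p ≤ 1. Then A is log-hyponormal. -/
open ContinuousLinearMap Filter

set_option synthInstance.maxHeartbeats 400000

theorem log_opRpow_aux {H : Type*} [NormedAddCommGroup H]
    [InnerProductSpace ℂ H] [CompleteSpace H]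
    (B : H →L[ℂ] H) (p : ℝ) (hB : IsStrictlyPositive B) :
    CFC.log (opRpow B p) = p • opLog B := by
  have hsp : ∀ x ∈ spectrum ℝ B, 0 < x := fun x hx => hB.spectrum_pos hx
  have hsa : IsSelfAdjoint B := hB.isSelfAdjoint
  have h1 : ContinuousOn (fun x : ℝ => x ^ p) (spectrum ℝ B) :=
    fun x hx => (Real.continuousAt_rpow_const x p (Or.inl (hsp x hx).ne')).continuousWithinAt
  have h2 : ContinuousOn Real.log (spectrum ℝ B) :=
    fun x hx => (Real.continuousAt_log (hsp x hx).ne').continuousWithinAt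
  have h3 : ContinuousOn Real.log ((fun x : ℝ => x ^ p) '' spectrum ℝ B) := by
    rintro _ ⟨x, hx, rfl⟩
    exact (Real.continuousAt_log (Real.rpow_pos_of_pos (hsp x hx) p).ne').continuousWithinAt
  unfold CFC.log opRpow opLog
  rw [← cfc_comp' Real.log (fun x : ℝ => x ^ p) B h3 h1 hsa, ← cfc_smul p Real.log B h2]
  refine cfc_congr fun x hx => ?_
  simp [Real.log_rpow (hsp x hx)]

theorem opRpow_pos_aux {H : Type*} [NormedAddCommGroup H]
    [InnerProductSpace ℂ H] [CompleteSpace H]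
    (B : H →L[ℂ] H) (p : ℝ) (hB : IsStrictlyPositive B) :
    IsStrictlyPositive (opRpow B p) := by
  have hsp : ∀ x ∈ spectrum ℝ B, 0 < x := fun x hx => hB.spectrum_pos hx
  have hsa : IsSelfAdjoint B := hB.isSelfAdjoint
  have h1 : ContinuousOn (fun x : ℝ => x ^ p) (spectrum ℝ B) :=
    fun x hx => (Real.continuousAt_rpow_const x p (Or.inl (hsp x hx).ne')).continuousWithinAt
  unfold opRpow
  rw [cfc_isStrictlyPositive_iff _ B h1 hsa]
  exact fun x hx => Real.rpow_pos_of_pos (hsp x hx) p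

theorem invertible_pHyponormal_logHyponormal {H : Type*} [NormedAddCommGroup H]
    [InnerProductSpace ℂ H] [CompleteSpace H]
    (A : H →L[ℂ] H) (p : ℝ) (hp0 : 0 < p) (hp1 : p ≤ 1)
    (hA : IsUnit A) (hAp : PHyponormal A p) : LogHyponormal A := by
  refine ⟨hA, ?_⟩
  have hA' : IsUnit (adjoint A) := hA.star
  have p1 : IsStrictlyPositive (A * adjoint A) :=
    IsStrictlyPositive.iff_of_unital.mpr ⟨mul_star_self_nonneg A, hA.mul hA'⟩
  have p2 : IsStrictlyPositive (adjoint A * A) :=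
    IsStrictlyPositive.iff_of_unital.mpr ⟨star_mul_self_nonneg A, hA'.mul hA⟩
  have h := CFC.log_le_log hAp (opRpow_pos_aux _ p p1)
  rw [log_opRpow_aux _ p p1, log_opRpow_aux _ p p2] at h
  have h' := smul_le_smul_of_nonneg_left h (inv_nonneg.mpr hp0.le)
  simpa only [smul_smul, inv_mul_cancel₀ hp0.ne', one_smul] using h'
end
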